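/- arXiv:2002.09789 — 2 statements merged into one kernel-verified Lean document; each statement's English description precedes it below -/
import Mathlib

section
/- There exists a binary self-dual code of length 68 and minimum (nonzero) weight 12 that has exactly 1062 codewords of weight 12 and exactly 11928 codewords of weight 14 (i.e. a self-dual [68,34,12] code with weight enumerator W_{68,2} with γ = 7 and β = 155). -/
/-- The dual of a code (submodule of `ι → R`) with respect to the standard bilinear form. -/
def dualCode {R : Type*} [CommRing R] {ι : Type*} [Fintype ι]
    (C : Submodule R (ι → R)) : Submodule R (ι → R) where
  carrier := {x | ∀ c ∈ C, ∑ i, x i * c i = 0}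
  add_mem' := by
    intro a b ha hb c hc
    simp only [Set.mem_setOf_eq] at ha hb ⊢
    simp [Pi.add_apply, add_mul, Finset.sum_add_distrib, ha c hc, hb c hc]
  zero_mem' := by
    intro c hc
    simp
  smul_mem' := by
    intro r a ha c hc
    simp only [Set.mem_setOf_eq] at ha ⊢
    simp [Pi.smul_apply, smul_eq_mul, mul_assoc, ← Finset.mul_sum, ha c hc]

/-- A code is self-dual if it equals its dual. -/
def IsSelfDual {R : Type*} [CommRing R] {ι : Type*} [Fintype ι]
    (C : Submodule R (ι → R)) : Prop :=
  C = dualCode C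

namespace SD68

/-- Row `i` of the `34 × 34` matrix `A` of the generator matrix `[I | A]`, as a bit mask. -/
def rowsA : List ℕ := [
    7839578943, 8921684639, 7969057791, 3206846975, 9615434079, 14625197567,
    6156810337, 8647338177, 13255991649, 10599463105, 8383755777, 15414626754,
    7248213442, 15104032418, 13930579874, 5958498818, 13356030660, 3158292836,
    1097093572, 7872440932, 7709861636, 1881251080, 11799449288, 14668853512,
    9023515496, 1125136040, 13601974128, 4115332560, 10183599888, 9340633872,
    1380647344, 5786225888, 10991876736, 674728320]

/-- The columns of `A`, as bit masks. -/
def rowsB : List ℕ := [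
    2047, 63551, 2031679, 65011775, 2080374847, 3339346285,
    2370771964, 16278452910, 10699036989, 5223605255, 2658169888, 15190436591,
    4473730635, 4825200597, 3117275121, 15798591160, 10024051920, 16795751351,
    9492215583, 6381242868, 9521808756, 15907849452, 3653528263, 3037728358,
    4485580475, 5751492591, 5239434104, 15935422556, 3647692575, 9342998136,
    3669788261, 4435098637, 2224684389, 5196835762]

/-! ### Bit-sliced computation -/

/-- The numbers of vectors of length `n` and weight `0, …, 7`. -/
def lensStep : List ℕ → ℕ → List ℕ
  | [], _ => []
  | l :: ls, pl => (l + pl) :: lensStep ls l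

def lens : ℕ → List ℕ
  | 0 => [1, 0, 0, 0, 0, 0, 0, 0]
  | n + 1 => lensStep (lens n) 0

def ones (l : ℕ) : ℕ := 1 <<< l - 1

def colStep (a : Bool) : List ℕ → List ℕ → ℕ → ℕ → List ℕ
  | l :: ls, x :: xs, pl, px =>
    (x + ((px ^^^ (cond a (ones pl) 0)) <<< l)) :: colStep a ls xs l x
  | _, _, _, _ => []

/-- The bit-sliced values of the parity check `x` on all vectors of length `n`,
sorted by weight. -/
def colE : ℕ → ℕ → List ℕ
  | 0, _ => [0, 0, 0, 0, 0, 0, 0, 0]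
  | n + 1, x => colStep (Nat.testBit x 0) (lens n) (colE n (x / 2)) 0 0

/-- Bit-sliced counter increment. -/
def addc : ℕ → List ℕ → List ℕ
  | _, [] => []
  | x, c :: cs => (c ^^^ x) :: addc (c &&& x) cs

def cntr : List ℕ → List ℕ
  | [] => [0, 0, 0, 0, 0, 0]
  | x :: xs => addc x (cntr xs)

/-- Bit-sliced comparison of a counter with `t`. -/
def eqT (o : ℕ) : List ℕ → ℕ → ℕ
  | [], _ => o
  | c :: cs, t => (c ^^^ (cond (Nat.testBit t 0) 0 o)) &&& eqT o cs (t / 2)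

/-- Number of ones among the `2 ^ k` lowest bits. -/
def pop : ℕ → ℕ → ℕ
  | 0, x => x
  | k + 1, x => cond (Nat.beq x 0) 0 (pop k (x &&& ones (2 ^ k)) + pop k (x >>> (2 ^ k)))

def tabAux (o : ℕ) (cs : List ℕ) : ℕ → ℕ → List ℕ
  | 0, _ => []
  | m + 1, t => pop 23 (eqT o cs t) :: tabAux o cs m (t + 1)

def tab (n : ℕ) (xs : List ℕ) (w : ℕ) : List ℕ :=
  tabAux (ones ((lens n).getD w 0)) (cntr (xs.map fun x => (colE n x).getD w 0)) (15 - w) 0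

/-! ### Meaning of the bit-sliced computation -/

/-- The number whose bits are the values of `f` along the list `L`. -/
def E {α : Type} (L : List α) (f : α → Bool) : ℕ :=
  match L with
  | [] => 0
  | a :: L => Nat.bit (f a) (E L f)

theorem E_xor {α : Type} (L : List α) (f g : α → Bool) :
    E L f ^^^ E L g = E L (fun a => xor (f a) (g a)) := by
  induction L with
  | nil => simp [E]
  | cons a L ih => simp only [E, Nat.xor_bit, ih]

theorem E_and {α : Type} (L : List α) (f g : α → Bool) :
    E L f &&& E L g = E L (fun a => f a && g a) := by
  induction L with
  | nil => simp [E]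
  | cons a L ih => simp only [E, Nat.land_bit, ih]

theorem E_map {α β : Type} (L : List α) (h : α → β) (f : β → Bool) :
    E (L.map h) f = E L (fun a => f (h a)) := by
  induction L with
  | nil => simp [E]
  | cons a L ih => simp only [E, List.map_cons, ih]

theorem E_append {α : Type} (L M : List α) (f : α → Bool) :
    E (L ++ M) f = E L f + E M f <<< L.length := by
  induction L with
  | nil => simp [E]
  | cons a L ih =>
    simp only [E, List.cons_append, ih, Nat.bit_val, Nat.shiftLeft_eq, List.length_cons, pow_succ]
    ring

theorem E_false {α : Type} (L : List α) : E L (fun _ => false) = 0 := by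
  induction L with
  | nil => simp [E]
  | cons a L ih => simp [E, ih]

theorem E_true {α : Type} (L : List α) : E L (fun _ => true) = ones L.length := by
  simp only [ones, Nat.one_shiftLeft]
  induction L with
  | nil => simp [E]
  | cons a L ih =>
    simp only [E, ih, Nat.bit_val, List.length_cons, pow_succ]
    have : 0 < 2 ^ L.length := by positivity
    simp only [Bool.toNat_true]
    omega

theorem E_lt {α : Type} (L : List α) (f : α → Bool) : E L f < 2 ^ L.length := by
  induction L with
  | nil => simp [E]
  | cons a L ih =>
    simp only [E, Nat.bit_val, List.length_cons, pow_succ]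
    have := Bool.toNat_lt (f a)
    omega

theorem E_eq_zero {α : Type} (L : List α) (f : α → Bool) (h : E L f = 0) :
    L.countP f = 0 := by
  induction L with
  | nil => simp
  | cons a L ih =>
    simp only [E, Nat.bit_val] at h
    have h1 : E L f = 0 := by omega
    have h2 : (f a).toNat = 0 := by omega
    have h3 : f a = false := by simpa using h2
    simp [h3, ih h1]

theorem pop_E {α : Type} (k : ℕ) (L : List α) (f : α → Bool) (h : L.length ≤ 2 ^ k) :
    pop k (E L f) = L.countP f := by
  induction k generalizing L with
  | zero =>
    match L with
    | [] => simp [pop, E]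
    | [a] => cases hf : f a <;> simp [pop, E, hf]
    | a :: b :: L => simp at h
  | succ k ih =>
    rw [pop]
    by_cases h0 : E L f = 0
    · rw [E_eq_zero L f h0, h0]; rfl
    · have hb : Nat.beq (E L f) 0 = false := by
        cases hb' : Nat.beq (E L f) 0
        · rfl
        · exact absurd (Nat.eq_of_beq_eq_true hb') h0
      rw [hb, cond_false]
      by_cases hl : L.length ≤ 2 ^ k
      · have hlt : E L f < 2 ^ (2 ^ k) :=
          (E_lt L f).trans_le (Nat.pow_le_pow_right (by norm_num) hl)
        have h1 : E L f &&& ones (2 ^ k) = E L f := by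
          rw [ones, Nat.one_shiftLeft, Nat.and_two_pow_sub_one_eq_mod, Nat.mod_eq_of_lt hlt]
        have h2 : E L f >>> (2 ^ k) = 0 := by
          rw [Nat.shiftRight_eq_div_pow, Nat.div_eq_of_lt hlt]
        have h3 : pop k 0 = 0 := by
          have := ih ([] : List α) (by simp)
          simpa [E] using this
        rw [h1, h2, h3, ih L hl, add_zero]
      · have hlen : (L.take (2 ^ k)).length = 2 ^ k := by
          rw [List.length_take]; omega
        have hE : E L f = E (L.take (2 ^ k)) f + E (L.drop (2 ^ k)) f * 2 ^ (2 ^ k) := by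
          conv_lhs => rw [← List.take_append_drop (2 ^ k) L, E_append, hlen, Nat.shiftLeft_eq]
        have hlt := E_lt (L.take (2 ^ k)) f
        rw [hlen] at hlt
        have h1 : E L f &&& ones (2 ^ k) = E (L.take (2 ^ k)) f := by
          rw [ones, Nat.one_shiftLeft, Nat.and_two_pow_sub_one_eq_mod, hE,
            Nat.add_mul_mod_self_right, Nat.mod_eq_of_lt hlt]
        have h2 : E L f >>> (2 ^ k) = E (L.drop (2 ^ k)) f := by
          rw [Nat.shiftRight_eq_div_pow, hE, Nat.add_mul_div_right _ _ (by positivity),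
            Nat.div_eq_of_lt hlt, zero_add]
        rw [h1, h2, ih _ hlen.le, ih _ (by rw [List.length_drop]; rw [pow_succ] at h; omega),
          ← List.countP_append, List.take_append_drop]

/-- Vectors of length `n` and weight `k - 1` (none for `k = 0`). -/
def U : (n : ℕ) → ℕ → List (Fin n → ZMod 2)
  | _, 0 => []
  | 0, 1 => [fun _ => 0]
  | 0, _ + 2 => []
  | n + 1, k + 1 => (U n (k + 1)).map (fun u => Fin.cons 0 u) ++
      (U n k).map (fun u => Fin.cons 1 u)

theorem U_zero (n : ℕ) : U n 0 = [] := by cases n <;> rfl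

theorem hammingNorm_cons {n : ℕ} (a : ZMod 2) (u : Fin n → ZMod 2) :
    hammingNorm (Fin.cons a u : Fin (n + 1) → ZMod 2) =
      (if a ≠ 0 then 1 else 0) + hammingNorm u := by
  simp only [hammingNorm, Finset.card_filter, Fin.sum_univ_succ, Fin.cons_zero, Fin.cons_succ]

theorem zmod2_cases (a : ZMod 2) : a = 0 ∨ a = 1 := by
  revert a; decide

theorem mem_U (n k : ℕ) (u : Fin n → ZMod 2) : u ∈ U n k ↔ hammingNorm u + 1 = k := by
  induction n generalizing k with
  | zero =>
    have h0 : hammingNorm u = 0 := by rw [hammingNorm_eq_zero]; exact Subsingleton.elim _ _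
    rw [h0]
    match k with
    | 0 => simp [U]
    | 1 => simp [U]; exact Subsingleton.elim _ _
    | k + 2 => simp [U]
  | succ n ih =>
    cases k with
    | zero => simp [U]
    | succ k =>
      obtain ⟨a, v, rfl⟩ : ∃ a v, u = Fin.cons a v := ⟨u 0, Fin.tail u, (Fin.cons_self_tail u).symm⟩
      simp only [U, List.mem_append, List.mem_map, Fin.cons_inj]
      rw [hammingNorm_cons]
      rcases zmod2_cases a with rfl | rfl
      · constructor
        · rintro (⟨w, hw, -, rfl⟩ | ⟨w, hw, h, -⟩)
          · rw [ih] at hw; simp; omega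
          · exact absurd h (by decide)
        · intro h
          left
          exact ⟨v, (ih _ _).2 (by simp at h; omega), rfl, rfl⟩
      · constructor
        · rintro (⟨w, hw, h, -⟩ | ⟨w, hw, -, rfl⟩)
          · exact absurd h (by decide)
          · rw [ih] at hw; simp; omega
        · intro h
          right
          exact ⟨v, (ih _ _).2 (by simp at h; omega), rfl, rfl⟩

theorem nodup_U (n k : ℕ) : (U n k).Nodup := by
  induction n generalizing k with
  | zero =>
    match k with
    | 0 => simp [U]
    | 1 => simp [U]
    | k + 2 => simp [U]
  | succ n ih =>
    cases k with
    | zero => simp [U]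
    | succ k =>
      simp only [U]
      refine List.Nodup.append ((ih _).map ?_) ((ih _).map ?_) ?_
      · intro a b h; exact (Fin.cons_inj.1 h).2
      · intro a b h; exact (Fin.cons_inj.1 h).2
      · intro a h1 h2
        simp only [List.mem_map] at h1 h2
        obtain ⟨b, -, rfl⟩ := h1
        obtain ⟨c, -, h⟩ := h2
        exact absurd (Fin.cons_inj.1 h).1 (by decide)

/-- The parity check given by the mask `x`. -/
def par (n x : ℕ) (u : Fin n → ZMod 2) : ZMod 2 :=
  ∑ i : Fin n, if Nat.testBit x i then u i else 0

def parB (n x : ℕ) (u : Fin n → ZMod 2) : Bool := decide (par n x u = 1)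

theorem par_cons (n x : ℕ) (a : ZMod 2) (u : Fin n → ZMod 2) :
    par (n + 1) x (Fin.cons a u) = (if Nat.testBit x 0 then a else 0) + par n (x / 2) u := by
  simp only [par, Fin.sum_univ_succ, Fin.cons_zero, Fin.cons_succ, Fin.val_zero, Fin.val_succ,
    Nat.testBit_succ]

theorem parB_cons_zero (n x : ℕ) (u : Fin n → ZMod 2) :
    parB (n + 1) x (Fin.cons 0 u) = parB n (x / 2) u := by
  simp [parB, par_cons]

theorem parB_cons_one (n x : ℕ) (u : Fin n → ZMod 2) :
    parB (n + 1) x (Fin.cons 1 u) = xor (parB n (x / 2) u) (Nat.testBit x 0) := by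
  simp only [parB, par_cons]
  generalize par n (x / 2) u = b
  generalize Nat.testBit x 0 = c
  revert b c
  decide

theorem lensStep_spec (n s m : ℕ) :
    lensStep ((List.range' (s + 1) m).map fun k => (U n k).length) (U n s).length =
      (List.range' (s + 1) m).map fun k => (U (n + 1) k).length := by
  induction m generalizing s with
  | zero => simp [lensStep]
  | succ m ih =>
    simp only [List.range'_succ, List.map_cons, lensStep, ih (s + 1)]
    simp [U]

theorem lens_spec (n : ℕ) : lens n = (List.range' 1 8).map fun k => (U n k).length := by
  induction n with
  | zero => rfl
  | succ n ih =>
    rw [lens, ih]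
    have := lensStep_spec n 0 8
    rw [U_zero] at this
    exact this

theorem colStep_spec (n x s m : ℕ) :
    colStep (Nat.testBit x 0) ((List.range' (s + 1) m).map fun k => (U n k).length)
      ((List.range' (s + 1) m).map fun k => E (U n k) (parB n (x / 2)))
      (U n s).length (E (U n s) (parB n (x / 2))) =
      (List.range' (s + 1) m).map fun k => E (U (n + 1) k) (parB (n + 1) x) := by
  induction m generalizing s with
  | zero => simp [colStep]
  | succ m ih =>
    simp only [List.range'_succ, List.map_cons, colStep, ih (s + 1)]
    congr 1
    have hc : cond (Nat.testBit x 0) (ones (U n s).length) 0 =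
        E (U n s) (fun _ => Nat.testBit x 0) := by
      cases Nat.testBit x 0
      · rw [E_false]; rfl
      · rw [E_true]; rfl
    rw [hc, E_xor]
    simp only [U, E_append, E_map, parB_cons_zero, parB_cons_one, List.length_map]

theorem colE_spec (n x : ℕ) :
    colE n x = (List.range' 1 8).map fun k => E (U n k) (parB n x) := by
  induction n generalizing x with
  | zero => simp [colE, List.range', U, E, parB, par]
  | succ n ih =>
    rw [colE, ih, lens_spec]
    have := colStep_spec n x 0 8
    simp only [U_zero, E, List.length_nil] at this
    exact this

/-- Value of a binary counter. -/
def val {α : Type} (fs : List (α → Bool)) (a : α) : ℕ :=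
  match fs with
  | [] => 0
  | f :: fs => (f a).toNat + 2 * val fs a

theorem val_lt {α : Type} (fs : List (α → Bool)) (a : α) : val fs a < 2 ^ fs.length := by
  induction fs with
  | nil => simp [val]
  | cons f fs ih =>
    have := Bool.toNat_lt (f a)
    simp only [val, List.length_cons, pow_succ]
    omega

theorem addc_spec {α : Type} (L : List α) (f : α → Bool) (fs : List (α → Bool)) :
    ∃ gs : List (α → Bool), gs.length = fs.length ∧
      addc (E L f) (fs.map (E L)) = gs.map (E L) ∧
      ∀ a, val gs a ≡ val fs a + (f a).toNat [MOD 2 ^ fs.length] := by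
  induction fs generalizing f with
  | nil => exact ⟨[], rfl, rfl, fun a => by simp [Nat.modEq_one]⟩
  | cons c fs ih =>
    obtain ⟨gs, h1, h2, h3⟩ := ih (fun a => c a && f a)
    refine ⟨(fun a => xor (c a) (f a)) :: gs, by simp [h1], ?_, fun a => ?_⟩
    · simp only [List.map_cons, addc, E_xor, E_and, h2]
    · have h4 := (h3 a).mul_left' 2
      simp only [val, List.length_cons, pow_succ']
      have h5 := h4.add_left (xor (c a) (f a)).toNat
      refine h5.trans ?_
      have : (xor (c a) (f a)).toNat + 2 * (val fs a + (c a && f a).toNat) =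
        (c a).toNat + 2 * val fs a + (f a).toNat := by
        cases c a <;> cases f a <;> simp <;> ring
      rw [this]

theorem cntr_spec {α : Type} (L : List α) (fs : List (α → Bool)) :
    ∃ gs : List (α → Bool), gs.length = 6 ∧ cntr (fs.map (E L)) = gs.map (E L) ∧
      ∀ a, val gs a ≡ (fs.map fun f => (f a).toNat).sum [MOD 2 ^ 6] := by
  induction fs with
  | nil =>
    refine ⟨List.replicate 6 (fun _ => false), rfl, ?_, fun a => ?_⟩
    · simp [cntr, E_false, List.replicate]
    · simp [val, List.replicate, Nat.ModEq]
  | cons f fs ih =>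
    obtain ⟨gs, h1, h2, h3⟩ := ih
    obtain ⟨hs, k1, k2, k3⟩ := addc_spec L f gs
    refine ⟨hs, k1.trans h1, ?_, fun a => ?_⟩
    · rw [List.map_cons, cntr, h2, k2]
    · rw [h1] at k3
      refine (k3 a).trans ?_
      rw [List.map_cons, List.sum_cons, add_comm]
      exact (h3 a).add_left _

theorem eq_aux (b : Bool) (v t : ℕ) :
    (xor b (!decide (t % 2 = 1)) && decide (v = t / 2)) = decide (b.toNat + 2 * v = t) := by
  rcases Nat.mod_two_eq_zero_or_one t with h | h <;> cases b <;> simp [h] <;> omega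

theorem eqT_spec {α : Type} (L : List α) (gs : List (α → Bool)) (t : ℕ)
    (ht : t < 2 ^ gs.length) :
    eqT (ones L.length) (gs.map (E L)) t = E L (fun a => decide (val gs a = t)) := by
  induction gs generalizing t with
  | nil =>
    have : t = 0 := by simpa using ht
    subst this
    simp [eqT, val, E_true]
  | cons g gs ih =>
    have hc : cond (Nat.testBit t 0) 0 (ones L.length) =
        E L (fun _ => !Nat.testBit t 0) := by
      cases Nat.testBit t 0
      · simp [E_true]
      · simp [E_false]
    rw [List.map_cons, eqT, hc, E_xor,
      ih (t / 2) (by rw [List.length_cons, pow_succ] at ht; omega), E_and]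
    congr 1
    funext a
    simp only [val, Nat.testBit_zero]
    exact eq_aux _ _ _

theorem tabAux_getD (o : ℕ) (cs : List ℕ) (m s t : ℕ) (ht : t < m) :
    (tabAux o cs m s).getD t 0 = pop 23 (eqT o cs (s + t)) := by
  induction m generalizing s t with
  | zero => omega
  | succ m ih =>
    cases t with
    | zero => simp [tabAux]
    | succ t =>
      rw [tabAux, List.getD_cons_succ, ih _ _ (by omega)]
      congr 2; ring

theorem tab_spec (n : ℕ) (xs : List ℕ) (hx : xs.length < 2 ^ 6) (w t : ℕ) (hw : w < 8)
    (ht : t < 15 - w) (hlen : (lens n).getD w 0 ≤ 2 ^ 23) :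
    (Finset.univ.filter fun u : Fin n → ZMod 2 =>
      hammingNorm u = w ∧ (xs.map fun x => (parB n x u).toNat).sum = t).card =
      (tab n xs w).getD t 0 := by
  rw [tab, tabAux_getD _ _ _ _ _ ht, zero_add]
  have hl : (lens n).getD w 0 = (U n (w + 1)).length := by
    rw [lens_spec, List.getD_eq_getElem _ _ (by simpa using hw)]
    simp [add_comm]
  have hc : ∀ x, (colE n x).getD w 0 = E (U n (w + 1)) (parB n x) := by
    intro x
    rw [colE_spec, List.getD_eq_getElem _ _ (by simpa using hw)]
    simp [add_comm]
  simp only [hc]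
  rw [hl] at hlen ⊢
  obtain ⟨gs, h1, h2, h3⟩ := cntr_spec (U n (w + 1)) (xs.map fun x => parB n x)
  simp only [List.map_map, Function.comp_def] at h2 h3
  rw [h2, eqT_spec _ _ _ (by rw [h1]; omega), pop_E _ _ _ hlen]
  have hval : ∀ u, val gs u = (xs.map fun x => (parB n x u).toNat).sum := by
    intro u
    have a2 := val_lt gs u
    rw [h1] at a2
    have a3 : (xs.map fun x => (parB n x u).toNat).sum ≤ xs.length := by
      have := List.sum_le_card_nsmul (xs.map fun x => (parB n x u).toNat) 1 (by
        intro y hy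
        obtain ⟨x, -, rfl⟩ := List.mem_map.1 hy
        exact Bool.toNat_le _)
      simpa using this
    exact Nat.ModEq.eq_of_lt_of_lt (h3 u) a2 (a3.trans_lt hx)
  simp only [hval]
  rw [List.countP_eq_length_filter, ← List.toFinset_card_of_nodup ((nodup_U _ _).filter _)]
  congr 1
  ext u
  simp [mem_U]

/-! ### The code generated by `[I | A]` -/

section general

variable {n : ℕ}

theorem toNat_parB (x : ℕ) (u : Fin n → ZMod 2) :
    (parB n x u).toNat = if par n x u ≠ 0 then 1 else 0 := by
  unfold parB
  generalize par n x u = a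
  revert a; decide

theorem sum_list (xs : List ℕ) (hx : xs.length = n) (g : ℕ → ℕ) :
    (xs.map g).sum = ∑ j : Fin n, g (xs.getD j 0) := by
  have : xs = List.ofFn (fun j : Fin n => xs.getD j 0) := by
    apply List.ext_getElem
    · simp [hx]
    · intro i h1 h2
      simp [h1]
  conv_lhs => rw [this]
  rw [List.map_ofFn, List.sum_ofFn]
  rfl

theorem norm_vecMul (M : Matrix (Fin n) (Fin n) (ZMod 2)) (xs : List ℕ) (hx : xs.length = n)
    (hM : ∀ i j : Fin n, M i j = if Nat.testBit (xs.getD j 0) i then 1 else 0)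
    (u : Fin n → ZMod 2) :
    (xs.map fun x => (parB n x u).toNat).sum = hammingNorm (Matrix.vecMul u M) := by
  rw [sum_list _ hx]
  simp only [hammingNorm, Finset.card_filter, toNat_parB]
  refine Finset.sum_congr rfl fun j _ => ?_
  have : par n (xs.getD j 0) u = Matrix.vecMul u M j := by
    simp only [par, Matrix.vecMul, dotProduct, hM]
    refine Finset.sum_congr rfl fun i _ => ?_
    simp
  rw [this]

/-- Number of codewords with weight `w` on the left and `t` on the right. -/
def NN (M : Matrix (Fin n) (Fin n) (ZMod 2)) (w t : ℕ) : ℕ :=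
  (Finset.univ.filter fun u : Fin n → ZMod 2 =>
    hammingNorm u = w ∧ hammingNorm (Matrix.vecMul u M) = t).card

theorem NN_tab (M : Matrix (Fin n) (Fin n) (ZMod 2)) (xs : List ℕ) (hx : xs.length = n)
    (hM : ∀ i j : Fin n, M i j = if Nat.testBit (xs.getD j 0) i then 1 else 0) (hn : n < 2 ^ 6)
    (w t : ℕ) (hw : w < 8) (ht : t < 15 - w) (hlen : (lens n).getD w 0 ≤ 2 ^ 23) :
    NN M w t = (tab n xs w).getD t 0 := by
  rw [← tab_spec n xs (hx ▸ hn) w t hw ht hlen, NN]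
  simp only [norm_vecMul M xs hx hM]

theorem NN_swap (M : Matrix (Fin n) (Fin n) (ZMod 2)) (h1 : M * M.transpose = 1) (w t : ℕ) :
    NN M t w = NN M.transpose w t := by
  have h2 : M.transpose * M = 1 := mul_eq_one_comm.1 h1
  refine Finset.card_bij' (fun u _ => Matrix.vecMul u M) (fun v _ => Matrix.vecMul v M.transpose)
    ?_ ?_ ?_ ?_
  · intro u hu
    simp only [Finset.mem_filter, Finset.mem_univ, true_and] at hu ⊢
    rw [Matrix.vecMul_vecMul, h1, Matrix.vecMul_one]
    exact ⟨hu.2, hu.1⟩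
  · intro u hu
    simp only [Finset.mem_filter, Finset.mem_univ, true_and] at hu ⊢
    rw [Matrix.vecMul_vecMul, h2, Matrix.vecMul_one]
    exact ⟨hu.2, hu.1⟩
  · intro u _
    rw [Matrix.vecMul_vecMul, h1, Matrix.vecMul_one]
  · intro u _
    rw [Matrix.vecMul_vecMul, h2, Matrix.vecMul_one]

/-- The codeword with information part `u`. -/
def enc (M : Matrix (Fin n) (Fin n) (ZMod 2)) (u : Fin n → ZMod 2) : Fin (n + n) → ZMod 2 :=
  Fin.append u (Matrix.vecMul u M)

theorem norm_enc (M : Matrix (Fin n) (Fin n) (ZMod 2)) (u : Fin n → ZMod 2) :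
    hammingNorm (enc M u) = hammingNorm u + hammingNorm (Matrix.vecMul u M) := by
  simp only [hammingNorm, Finset.card_filter]
  rw [Fin.sum_univ_add]
  simp only [enc, Fin.append_left, Fin.append_right]

theorem enc_injective (M : Matrix (Fin n) (Fin n) (ZMod 2)) : Function.Injective (enc M) := by
  intro u v h
  funext i
  have := congrFun h (Fin.castAdd n i)
  simpa only [enc, Fin.append_left] using this

theorem append_add (a b c d : Fin n → ZMod 2) :
    Fin.append a b + Fin.append c d = Fin.append (a + c) (b + d) := by
  funext i
  refine Fin.addCases (fun i => ?_) (fun i => ?_) i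
  · simp only [Pi.add_apply, Fin.append_left]
  · simp only [Pi.add_apply, Fin.append_right]

theorem append_smul (r : ZMod 2) (a b : Fin n → ZMod 2) :
    r • Fin.append a b = Fin.append (r • a) (r • b) := by
  funext i
  refine Fin.addCases (fun i => ?_) (fun i => ?_) i
  · simp only [Pi.smul_apply, Fin.append_left]
  · simp only [Pi.smul_apply, Fin.append_right]

/-- The code generated by `[I | M]`. -/
def code (M : Matrix (Fin n) (Fin n) (ZMod 2)) : Submodule (ZMod 2) (Fin (n + n) → ZMod 2) where
  carrier := Set.range (enc M)
  add_mem' := by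
    rintro _ _ ⟨u, rfl⟩ ⟨v, rfl⟩
    refine ⟨u + v, ?_⟩
    rw [enc, Matrix.add_vecMul]
    exact (append_add _ _ _ _).symm
  zero_mem' := by
    refine ⟨0, ?_⟩
    rw [← hammingNorm_eq_zero, norm_enc]
    simp
  smul_mem' := by
    rintro r _ ⟨u, rfl⟩
    refine ⟨r • u, ?_⟩
    rw [enc, Matrix.smul_vecMul]
    exact (append_smul _ _ _).symm

theorem mem_code (M : Matrix (Fin n) (Fin n) (ZMod 2)) (v : Fin (n + n) → ZMod 2) :
    v ∈ code M ↔ ∃ u, enc M u = v := Iff.rfl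

theorem dot_append (a b c d : Fin n → ZMod 2) :
    ∑ i : Fin (n + n), Fin.append a b i * Fin.append c d i = a ⬝ᵥ c + b ⬝ᵥ d := by
  rw [Fin.sum_univ_add]
  simp only [Fin.append_left, Fin.append_right, dotProduct]

theorem code_selfDual (M : Matrix (Fin n) (Fin n) (ZMod 2)) (hM : M * M.transpose = 1) :
    IsSelfDual (code M) := by
  have hM' : M.transpose * M = 1 := mul_eq_one_comm.1 hM
  unfold IsSelfDual
  ext x
  constructor
  · rintro ⟨u, rfl⟩ c ⟨v, rfl⟩
    rw [enc, enc, dot_append]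
    rw [← Matrix.dotProduct_mulVec, ← Matrix.vecMul_transpose, Matrix.vecMul_vecMul,
      hM, Matrix.vecMul_one]
    exact CharTwo.add_self_eq_zero _
  · intro hx
    obtain ⟨a, b, rfl⟩ : ∃ a b : Fin n → ZMod 2, x = Fin.append a b :=
      ⟨fun i => x (Fin.castAdd n i), fun i => x (Fin.natAdd n i),
        (Fin.append_castAdd_natAdd (f := x)).symm⟩
    have h : ∀ v, (a + Matrix.mulVec M b) ⬝ᵥ v = 0 := by
      intro v
      have h1 := hx (enc M v) ⟨v, rfl⟩
      rw [enc, dot_append] at h1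
      rw [add_dotProduct, dotProduct_comm (Matrix.mulVec M b) v, Matrix.dotProduct_mulVec,
        dotProduct_comm _ b]
      exact h1
    have h2 : a + Matrix.mulVec M b = 0 := dotProduct_eq_zero _ h
    have h3 : a = Matrix.mulVec M b := by
      funext i
      exact CharTwo.add_eq_zero.1 (congrFun h2 i)
    refine ⟨a, ?_⟩
    rw [enc]
    congr 1
    rw [h3, ← Matrix.vecMul_transpose, Matrix.vecMul_vecMul, hM', Matrix.vecMul_one]

theorem ncard_code (M : Matrix (Fin n) (Fin n) (ZMod 2)) (s : ℕ) :
    {v | v ∈ code M ∧ hammingNorm v = s}.ncard =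
      ∑ w ∈ Finset.range (s + 1), NN M w (s - w) := by
  have h1 : {v | v ∈ code M ∧ hammingNorm v = s} = enc M '' (↑(Finset.univ.filter
      fun u : Fin n → ZMod 2 => hammingNorm u + hammingNorm (Matrix.vecMul u M) = s) : Set _) := by
    ext v
    simp only [Set.mem_ofPred_eq, mem_code, Set.mem_image, Finset.coe_filter, Finset.mem_univ,
      true_and]
    constructor
    · rintro ⟨⟨u, rfl⟩, h⟩
      exact ⟨u, by rw [← norm_enc]; exact h, rfl⟩
    · rintro ⟨u, h, rfl⟩
      exact ⟨⟨u, rfl⟩, by rw [norm_enc]; exact h⟩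
  rw [h1, Set.ncard_image_of_injective _ (enc_injective M), Set.ncard_coe_finset,
    Finset.card_eq_sum_card_fiberwise (f := fun u => hammingNorm u) (t := Finset.range (s + 1))]
  · refine Finset.sum_congr rfl fun w hw => ?_
    rw [NN, Finset.filter_filter]
    congr 1
    ext u
    simp only [Finset.mem_filter, Finset.mem_univ, true_and]
    have := Finset.mem_range.1 hw
    omega
  · intro u hu
    simp only [Finset.coe_filter, Finset.mem_univ, true_and, Set.mem_ofPred_eq] at hu
    simp only [Finset.coe_range, Set.mem_Iio]
    omega

theorem code_min_weight (M : Matrix (Fin n) (Fin n) (ZMod 2)) (hM : M * M.transpose = 1)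
    (hl : ∀ w t, 1 ≤ w → w ≤ 5 → w + t < 12 → NN M w t = 0)
    (hr : ∀ w t, 1 ≤ w → w ≤ 5 → w + t < 12 → NN M t w = 0)
    (v : Fin (n + n) → ZMod 2) (hv : v ∈ code M) (h0 : v ≠ 0) : 12 ≤ hammingNorm v := by
  obtain ⟨u, rfl⟩ := hv
  by_contra hlt
  rw [norm_enc] at hlt
  have hN : NN M (hammingNorm u) (hammingNorm (Matrix.vecMul u M)) ≠ 0 := by
    rw [NN]
    exact Finset.card_ne_zero_of_mem (a := u) (by simp)
  have hu : u ≠ 0 := by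
    rintro rfl
    apply h0
    rw [← hammingNorm_eq_zero, norm_enc]
    simp
  have hu' : Matrix.vecMul u M ≠ 0 := by
    intro h
    apply hu
    rw [← Matrix.vecMul_one u, ← hM, ← Matrix.vecMul_vecMul, h, Matrix.zero_vecMul]
  have p1 : 0 < hammingNorm u := hammingNorm_pos_iff.2 hu
  have p2 : 0 < hammingNorm (Matrix.vecMul u M) := hammingNorm_pos_iff.2 hu'
  by_cases h5 : hammingNorm u ≤ 5
  · exact hN (hl _ _ p1 h5 (by omega))
  · exact hN (hr _ _ p2 (by omega) (by omega))

/-- Antidiagonal sums. -/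
theorem sum12 (f : ℕ → ℕ → ℕ) : ∑ w ∈ Finset.range (12 + 1), f w (12 - w) =
    f 0 12 + f 1 11 + f 2 10 + f 3 9 + f 4 8 + f 5 7 + f 6 6 + f 7 5 + f 8 4 + f 9 3 + f 10 2 +
      f 11 1 + f 12 0 := by
  simp [Finset.sum_range_succ]

theorem sum14 (f : ℕ → ℕ → ℕ) : ∑ w ∈ Finset.range (14 + 1), f w (14 - w) =
    f 0 14 + f 1 13 + f 2 12 + f 3 11 + f 4 10 + f 5 9 + f 6 8 + f 7 7 + f 8 6 + f 9 5 + f 10 4 +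
      f 11 3 + f 12 2 + f 13 1 + f 14 0 := by
  simp [Finset.sum_range_succ]

end general

/-! ### The particular code -/

/-- The matrix `A`. -/
def M : Matrix (Fin 34) (Fin 34) (ZMod 2) := fun i j =>
  if Nat.testBit (rowsA.getD i 0) j then 1 else 0

theorem lens_le : ∀ w < 8, (lens 34).getD w 0 ≤ 2 ^ 23 := by decide +kernel

theorem testBit_AB : ∀ i j : Fin 34,
    Nat.testBit (rowsA.getD i 0) j = Nat.testBit (rowsB.getD j 0) i := by decide +kernel

theorem M_mul_transpose : M * M.transpose = 1 := by
  have h : ∀ i j : Fin 34, ∑ k : Fin 34, M i k * M j k = if i = j then 1 else 0 := by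
    decide +kernel
  ext i j
  rw [Matrix.mul_apply, Matrix.one_apply]
  exact h i j

theorem NN_left (w t : ℕ) (hw : w < 8) (ht : t < 15 - w) :
    NN M w t = (tab 34 rowsB w).getD t 0 :=
  NN_tab M rowsB rfl (fun i j => by rw [M, testBit_AB]) (by norm_num) w t hw ht (lens_le w hw)

theorem NN_right (w t : ℕ) (hw : w < 8) (ht : t < 15 - w) :
    NN M t w = (tab 34 rowsA w).getD t 0 := by
  rw [NN_swap M M_mul_transpose]
  exact NN_tab M.transpose rowsA rfl (fun i j => by rw [Matrix.transpose_apply, M]) (by norm_num)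
    w t hw ht (lens_le w hw)

theorem tabA0 : tab 34 rowsB 0 = [1, 0, 0, 0, 0, 0, 0, 0, 0, 0, 0, 0, 0, 0, 0] := by decide +kernel

theorem tabB0 : tab 34 rowsA 0 = [1, 0, 0, 0, 0, 0, 0, 0, 0, 0, 0, 0, 0, 0, 0] := by decide +kernel

theorem tabA1 : tab 34 rowsB 1 = [0, 0, 0, 0, 0, 0, 0, 0, 0, 0, 0, 5, 0, 0] := by decide +kernel

theorem tabB1 : tab 34 rowsA 1 = [0, 0, 0, 0, 0, 0, 0, 0, 0, 0, 0, 5, 0, 3] := by decide +kernel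

theorem tabA2 : tab 34 rowsB 2 = [0, 0, 0, 0, 0, 0, 0, 0, 0, 0, 14, 0, 7] := by decide +kernel

theorem tabB2 : tab 34 rowsA 2 = [0, 0, 0, 0, 0, 0, 0, 0, 0, 0, 14, 0, 21] := by decide +kernel

theorem tabA3 : tab 34 rowsB 3 = [0, 0, 0, 0, 0, 0, 0, 0, 0, 69, 0, 39] := by decide +kernel

theorem tabB3 : tab 34 rowsA 3 = [0, 0, 0, 0, 0, 0, 0, 0, 0, 30, 0, 223] := by decide +kernel

theorem tabA4 : tab 34 rowsB 4 = [0, 0, 0, 0, 0, 0, 0, 0, 147, 0, 306] := by decide +kernel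

theorem tabB4 : tab 34 rowsA 4 = [0, 0, 0, 0, 0, 0, 0, 0, 92, 0, 710] := by decide +kernel

theorem tabA5 : tab 34 rowsB 5 = [0, 0, 0, 0, 0, 0, 0, 222, 0, 1061] := by decide +kernel

theorem tabB5 : tab 34 rowsA 5 = [0, 0, 0, 0, 0, 0, 0, 185, 0, 1688] := by decide +kernel

theorem tabA6 : tab 34 rowsB 6 = [0, 0, 0, 0, 0, 0, 279, 0, 2199] := by decide +kernel

theorem tabB6 : tab 34 rowsA 6 = [0, 0, 0, 0, 0, 0, 279, 0, 2685] := by decide +kernel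

theorem tabA7 : tab 34 rowsB 7 = [0, 0, 0, 0, 0, 185, 0, 2986] := by decide +kernel

theorem card12 : {v | v ∈ code M ∧ hammingNorm v = 12}.ncard = 1062 := by
  rw [ncard_code, sum12]
  have a0 : NN M 0 12 = 0 := by
    rw [NN_left 0 12 (by norm_num) (by norm_num), tabA0]; rfl
  have a1 : NN M 1 11 = 5 := by
    rw [NN_left 1 11 (by norm_num) (by norm_num), tabA1]; rfl
  have a2 : NN M 2 10 = 14 := by
    rw [NN_left 2 10 (by norm_num) (by norm_num), tabA2]; rfl
  have a3 : NN M 3 9 = 69 := by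
    rw [NN_left 3 9 (by norm_num) (by norm_num), tabA3]; rfl
  have a4 : NN M 4 8 = 147 := by
    rw [NN_left 4 8 (by norm_num) (by norm_num), tabA4]; rfl
  have a5 : NN M 5 7 = 222 := by
    rw [NN_left 5 7 (by norm_num) (by norm_num), tabA5]; rfl
  have a6 : NN M 6 6 = 279 := by
    rw [NN_left 6 6 (by norm_num) (by norm_num), tabA6]; rfl
  have a7 : NN M 7 5 = 185 := by
    rw [NN_right 5 7 (by norm_num) (by norm_num), tabB5]; rfl
  have a8 : NN M 8 4 = 92 := by
    rw [NN_right 4 8 (by norm_num) (by norm_num), tabB4]; rfl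
  have a9 : NN M 9 3 = 30 := by
    rw [NN_right 3 9 (by norm_num) (by norm_num), tabB3]; rfl
  have a10 : NN M 10 2 = 14 := by
    rw [NN_right 2 10 (by norm_num) (by norm_num), tabB2]; rfl
  have a11 : NN M 11 1 = 5 := by
    rw [NN_right 1 11 (by norm_num) (by norm_num), tabB1]; rfl
  have a12 : NN M 12 0 = 0 := by
    rw [NN_right 0 12 (by norm_num) (by norm_num), tabB0]; rfl
  rw [a0, a1, a2, a3, a4, a5, a6, a7, a8, a9, a10, a11, a12]

theorem card14 : {v | v ∈ code M ∧ hammingNorm v = 14}.ncard = 11928 := by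
  rw [ncard_code, sum14]
  have a0 : NN M 0 14 = 0 := by
    rw [NN_left 0 14 (by norm_num) (by norm_num), tabA0]; rfl
  have a1 : NN M 1 13 = 0 := by
    rw [NN_left 1 13 (by norm_num) (by norm_num), tabA1]; rfl
  have a2 : NN M 2 12 = 7 := by
    rw [NN_left 2 12 (by norm_num) (by norm_num), tabA2]; rfl
  have a3 : NN M 3 11 = 39 := by
    rw [NN_left 3 11 (by norm_num) (by norm_num), tabA3]; rfl
  have a4 : NN M 4 10 = 306 := by
    rw [NN_left 4 10 (by norm_num) (by norm_num), tabA4]; rfl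
  have a5 : NN M 5 9 = 1061 := by
    rw [NN_left 5 9 (by norm_num) (by norm_num), tabA5]; rfl
  have a6 : NN M 6 8 = 2199 := by
    rw [NN_left 6 8 (by norm_num) (by norm_num), tabA6]; rfl
  have a7 : NN M 7 7 = 2986 := by
    rw [NN_left 7 7 (by norm_num) (by norm_num), tabA7]; rfl
  have a8 : NN M 8 6 = 2685 := by
    rw [NN_right 6 8 (by norm_num) (by norm_num), tabB6]; rfl
  have a9 : NN M 9 5 = 1688 := by
    rw [NN_right 5 9 (by norm_num) (by norm_num), tabB5]; rfl
  have a10 : NN M 10 4 = 710 := by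
    rw [NN_right 4 10 (by norm_num) (by norm_num), tabB4]; rfl
  have a11 : NN M 11 3 = 223 := by
    rw [NN_right 3 11 (by norm_num) (by norm_num), tabB3]; rfl
  have a12 : NN M 12 2 = 21 := by
    rw [NN_right 2 12 (by norm_num) (by norm_num), tabB2]; rfl
  have a13 : NN M 13 1 = 3 := by
    rw [NN_right 1 13 (by norm_num) (by norm_num), tabB1]; rfl
  have a14 : NN M 14 0 = 0 := by
    rw [NN_right 0 14 (by norm_num) (by norm_num), tabB0]; rfl
  rw [a0, a1, a2, a3, a4, a5, a6, a7, a8, a9, a10, a11, a12, a13, a14]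

theorem NN_left_zero (w t : ℕ) (hw : 1 ≤ w) (hw' : w ≤ 5) (h : w + t < 12) : NN M w t = 0 := by
  rw [NN_left w t (by omega) (by omega)]
  have ht : t < 11 := by omega
  interval_cases w
  · rw [tabA1]; interval_cases t <;> first | rfl | omega
  · rw [tabA2]; interval_cases t <;> first | rfl | omega
  · rw [tabA3]; interval_cases t <;> first | rfl | omega
  · rw [tabA4]; interval_cases t <;> first | rfl | omega
  · rw [tabA5]; interval_cases t <;> first | rfl | omega

theorem NN_right_zero (w t : ℕ) (hw : 1 ≤ w) (hw' : w ≤ 5) (h : w + t < 12) : NN M t w = 0 := by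
  rw [NN_right w t (by omega) (by omega)]
  have ht : t < 11 := by omega
  interval_cases w
  · rw [tabB1]; interval_cases t <;> first | rfl | omega
  · rw [tabB2]; interval_cases t <;> first | rfl | omega
  · rw [tabB3]; interval_cases t <;> first | rfl | omega
  · rw [tabB4]; interval_cases t <;> first | rfl | omega
  · rw [tabB5]; interval_cases t <;> first | rfl | omega

end SD68

/-- There exists a binary self-dual `[68, 34, 12]` code with weight enumerator
`W_{68,2}` (γ = 7, β = 155): minimum nonzero weight 12, exactly 1062 codewords of weight 12
and exactly 11928 codewords of weight 14. -/
theorem exists_selfDual_68_16 :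
    ∃ C : Submodule (ZMod 2) (Fin 68 → ZMod 2),
      IsSelfDual C ∧
      (∀ v ∈ C, v ≠ 0 → 12 ≤ hammingNorm v) ∧
      (∃ v ∈ C, hammingNorm v = 12) ∧
      {v | v ∈ C ∧ hammingNorm v = 12}.ncard = 1062 ∧
      {v | v ∈ C ∧ hammingNorm v = 14}.ncard = 11928 := by
  obtain ⟨w, hw⟩ : {v | v ∈ SD68.code SD68.M ∧ hammingNorm v = 12}.Nonempty := by
    rw [Set.nonempty_iff_ne_empty]
    intro h
    have h12 := SD68.card12
    rw [h, Set.ncard_empty] at h12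
    omega
  exact ⟨SD68.code SD68.M, SD68.code_selfDual SD68.M SD68.M_mul_transpose,
    SD68.code_min_weight SD68.M SD68.M_mul_transpose SD68.NN_left_zero SD68.NN_right_zero,
    ⟨w, hw.1, hw.2⟩, SD68.card12, SD68.card14⟩
end

section
/- There exists a binary self-dual code of length 68 and minimum (nonzero) weight 12 that has exactly 966 codewords of weight 12 and exactly 12376 codewords of weight 14 (i.e. a self-dual [68,34,12] code with weight enumerator W_{68,2} with γ = 6 and β = 131). -/
set_option linter.unusedSectionVars false

section Generic

open Finset Polynomial

abbrev F2 := ZMod 2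

theorem F2.cases (b : ZMod 2) : b = 0 ∨ b = 1 := by revert b; decide

/-- sign character -/
def chi (b : ZMod 2) : ℤ := if b = 0 then 1 else -1

theorem chi_add (a b : ZMod 2) : chi (a + b) = chi a * chi b := by revert a b; decide

theorem chi_zero : chi 0 = 1 := rfl

theorem chi_sum {ι : Type*} (s : Finset ι) (f : ι → ZMod 2) :
    chi (∑ i ∈ s, f i) = ∏ i ∈ s, chi (f i) := by
  classical
  induction s using Finset.induction_on with
  | empty => simp [chi_zero]
  | insert a s ha ih => rw [sum_insert ha, prod_insert ha, chi_add, ih]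

variable {ι : Type*} [Fintype ι] [DecidableEq ι]

theorem hn_eq_sum (v : ι → ZMod 2) : hammingNorm v = ∑ i, (v i).val := by
  rw [hammingNorm, card_filter]
  refine sum_congr rfl fun i _ => ?_
  rcases F2.cases (v i) with h | h <;> rw [h] <;> rfl

theorem hn_le (v : ι → ZMod 2) : hammingNorm v ≤ Fintype.card ι := by
  rw [hammingNorm]; exact card_le_univ _

theorem val_add_F2 (a b : ZMod 2) : (a + b).val + 2 * (a * b).val = a.val + b.val := by
  revert a b; decide

theorem hn_add (a b : ι → ZMod 2) :
    hammingNorm (a + b) + 2 * hammingNorm (a * b) = hammingNorm a + hammingNorm b := by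
  simp only [hn_eq_sum, mul_sum, ← sum_add_distrib, Pi.add_apply, Pi.mul_apply, val_add_F2]

theorem hn_cast (a : ι → ZMod 2) : ((hammingNorm a : ℕ) : ZMod 2) = ∑ i, a i := by
  rw [hn_eq_sum]; push_cast
  exact sum_congr rfl fun i _ => by simp

theorem even_hn (a : ι → ZMod 2) (h : ∑ i, a i = 0) : 2 ∣ hammingNorm a := by
  rw [← hn_cast] at h
  exact (ZMod.natCast_eq_zero_iff _ 2).1 h

theorem self_mul_F2 (a : ι → ZMod 2) : a * a = a := by
  ext i; simp only [Pi.mul_apply]; generalize a i = b; revert b; decide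

theorem add_self_F2 (a : ι → ZMod 2) : a + a = 0 := by
  ext i; simp only [Pi.add_apply, Pi.zero_apply]; generalize a i = b; revert b; decide

theorem hn_one_add (v : ι → ZMod 2) : hammingNorm (v + 1) + hammingNorm v = Fintype.card ι := by
  have h := hn_add v 1
  have h1 : hammingNorm (1 : ι → ZMod 2) = Fintype.card ι := by
    rw [hn_eq_sum]; simp [ZMod.val_one]
  rw [mul_one, h1] at h; omega

/-- The Fourier transform of `X ^ wt`. -/
theorem fourier_wt (u : ι → ZMod 2) :
    (1 - X : ℤ[X]) ^ hammingNorm u * (1 + X) ^ (Fintype.card ι - hammingNorm u) =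
      ∑ v : ι → ZMod 2, C (chi (∑ i, u i * v i)) * X ^ hammingNorm v := by
  have h1 : ∀ v : ι → ZMod 2, C (chi (∑ i, u i * v i)) * (X : ℤ[X]) ^ hammingNorm v =
      ∏ i, (C (chi (u i * v i)) * X ^ (v i).val) := by
    intro v
    rw [prod_mul_distrib, chi_sum, map_prod, hn_eq_sum, prod_pow_eq_pow_sum]
  simp only [h1]
  have h2 := (Finset.prod_univ_sum (fun _ : ι => (univ : Finset (ZMod 2)))
    (fun i b => C (chi (u i * b)) * (X : ℤ[X]) ^ b.val))
  rw [Fintype.piFinset_univ] at h2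
  rw [← h2]
  have h3 : ∀ i, ∑ b : ZMod 2, C (chi (u i * b)) * (X : ℤ[X]) ^ b.val =
      if u i ≠ 0 then 1 - X else 1 + X := by
    intro i
    have e : ∀ f : ZMod 2 → ℤ[X], ∑ b, f b = f 0 + f 1 := fun f => Fin.sum_univ_two f
    rw [e]
    rcases F2.cases (u i) with h | h <;> rw [h] <;> (simp [chi, ZMod.val_one]; try ring)
  simp only [h3]
  rw [prod_ite, prod_const, prod_const]
  congr 2
  have := card_filter_add_card_filter_not (s := (univ : Finset ι)) (fun i => u i ≠ 0)
  rw [hammingNorm, ← card_univ]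
  omega

open Classical in
/-- Poisson summation for a coset of a self-dual code. -/
theorem poisson (K : Submodule (ZMod 2) (ι → ZMod 2)) (hK : IsSelfDual K) (s : ι → ZMod 2) :
    ∑ c ∈ univ.filter (· ∈ K), (1 - X : ℤ[X]) ^ hammingNorm (s + c) *
        (1 + X) ^ (Fintype.card ι - hammingNorm (s + c)) =
      ∑ v ∈ univ.filter (· ∈ K),
        C (((univ.filter (· ∈ K)).card : ℤ) * chi (∑ i, s i * v i)) * X ^ hammingNorm v := by
  simp only [fourier_wt]
  rw [sum_comm, sum_filter (s := univ) (p := (· ∈ K)) (f := fun v => C (((univ.filter (· ∈ K)).card : ℤ) * chi (∑ i, s i * v i)) * X ^ hammingNorm v)]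
  refine sum_congr rfl fun v _ => ?_
  have h1 : ∀ c : ι → ZMod 2, chi (∑ i, (s + c) i * v i) =
      chi (∑ i, s i * v i) * chi (∑ i, v i * c i) := by
    intro c
    rw [← chi_add, ← sum_add_distrib]
    congr 1
    exact sum_congr rfl fun i _ => by simp only [Pi.add_apply]; ring
  simp only [h1]
  rw [← sum_mul, ← map_sum, ← mul_sum]
  have hmem : v ∈ K ↔ ∀ c ∈ K, ∑ i, v i * c i = 0 := by
    conv_lhs => rw [hK]
    rfl
  by_cases hv : v ∈ K
  · rw [if_pos hv]
    have : ∑ c ∈ univ.filter (· ∈ K), chi (∑ i, v i * c i) = ((univ.filter (· ∈ K)).card : ℤ) := by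
      rw [card_eq_sum_ones]; push_cast
      refine sum_congr rfl fun c hc => ?_
      rw [hmem.1 hv c (mem_filter.1 hc).2]; rfl
    rw [this, mul_comm (chi _)]
  · rw [if_neg hv]
    have hex : ∃ d ∈ K, ∑ i, v i * d i ≠ 0 := by
      by_contra hcon; push Not at hcon; exact hv (hmem.2 hcon)
    obtain ⟨d, hd, hd'⟩ := hex
    have hd1 : ∑ i, v i * d i = 1 := (F2.cases _).resolve_left hd'
    have hS : ∑ c ∈ univ.filter (· ∈ K), chi (∑ i, v i * c i) =
        ∑ c ∈ univ.filter (· ∈ K), - chi (∑ i, v i * c i) := by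
      refine sum_nbij' (fun c => c + d) (fun c => c + d) ?_ ?_ ?_ ?_ ?_
      · intro c hc; simp only [mem_filter, mem_univ, true_and] at hc ⊢; exact K.add_mem hc hd
      · intro c hc; simp only [mem_filter, mem_univ, true_and] at hc ⊢; exact K.add_mem hc hd
      · intro c _; rw [add_assoc, add_self_F2, add_zero]
      · intro c _; rw [add_assoc, add_self_F2, add_zero]
      · intro c _
        have : ∑ i, v i * (c + d) i = ∑ i, v i * c i + 1 := by
          rw [← hd1, ← sum_add_distrib]
          exact sum_congr rfl fun i _ => by simp only [Pi.add_apply]; ring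
        rw [this, chi_add]; simp [chi]
    rw [sum_neg_distrib] at hS
    have : ∑ c ∈ univ.filter (· ∈ K), chi (∑ i, v i * c i) = 0 := by omega
    rw [this]; simp

open Classical in
/-- number of vectors of weight `j` in the coset `s + K` -/
noncomputable def cosetCount (K : Submodule (ZMod 2) (ι → ZMod 2)) (s : ι → ZMod 2) (j : ℕ) : ℕ :=
  (univ.filter (fun v => v + s ∈ K ∧ hammingNorm v = j)).card

/-- Krawtchouk value. -/
noncomputable def kraw (N k j : ℕ) : ℤ := ((1 - X : ℤ[X]) ^ j * (1 + X) ^ (N - j)).coeff k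

theorem kraw_eq (N k j : ℕ) : kraw N k j =
    ∑ i ∈ range (k + 1), (-1) ^ i * (j.choose i : ℤ) * ((N - j).choose (k - i) : ℤ) := by
  have h : (1 - X : ℤ[X]) ^ j = ((1 + X : ℤ[X]) ^ j).comp (C (-1) * X) := by
    simp [sub_eq_add_neg]
  rw [kraw, coeff_mul, Nat.sum_antidiagonal_eq_sum_range_succ_mk]
  refine sum_congr rfl fun i _ => ?_
  simp only
  rw [h, comp_C_mul_X_coeff, coeff_one_add_X_pow, coeff_one_add_X_pow]
  ring

open Classical in
theorem poisson_coeff (K : Submodule (ZMod 2) (ι → ZMod 2)) (hK : IsSelfDual K) (s : ι → ZMod 2)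
    (k : ℕ) (e : ℤ) (he : ∀ c ∈ K, hammingNorm c = k → chi (∑ i, s i * c i) = e) :
    ∑ j ∈ range (Fintype.card ι + 1), (cosetCount K s j : ℤ) * kraw (Fintype.card ι) k j =
      (univ.filter (· ∈ K)).card * e * cosetCount K 0 k := by
  have h := congrArg (fun p : ℤ[X] => p.coeff k) (poisson K hK s)
  simp only [finsetSum_coeff, coeff_C_mul, coeff_X_pow] at h
  have hl : ∑ j ∈ range (Fintype.card ι + 1), (cosetCount K s j : ℤ) * kraw (Fintype.card ι) k j =
      ∑ c ∈ univ.filter (· ∈ K), kraw (Fintype.card ι) k (hammingNorm (s + c)) := by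
    rw [← sum_fiberwise_of_maps_to (s := univ.filter (· ∈ K)) (t := range (Fintype.card ι + 1))
      (g := fun c => hammingNorm (s + c))
      (fun c _ => mem_range.2 (Nat.lt_succ_of_le (hn_le _)))]
    refine sum_congr rfl fun j _ => ?_
    rw [sum_congr rfl (g := fun _ => kraw (Fintype.card ι) k j)
      (fun c hc => by rw [(mem_filter.1 hc).2]), sum_const, nsmul_eq_mul]
    congr 2
    rw [cosetCount]
    refine card_nbij' (fun v => v + s) (fun v => v + s) ?_ ?_ ?_ ?_
    · intro v hv
      simp only [coe_filter, mem_filter, mem_univ, true_and, Set.mem_ofPred_eq] at hv ⊢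
      refine ⟨hv.1, ?_⟩
      rw [add_comm v s, ← add_assoc, add_self_F2, zero_add]; exact hv.2
    · intro v hv
      simp only [coe_filter, mem_filter, mem_univ, true_and, Set.mem_ofPred_eq] at hv ⊢
      refine ⟨?_, ?_⟩
      · rw [add_assoc, add_self_F2, add_zero]; exact hv.1
      · rw [add_comm]; exact hv.2
    · intro v _; simp only; rw [add_assoc, add_self_F2, add_zero]
    · intro v _; simp only; rw [add_assoc, add_self_F2, add_zero]
  rw [hl]
  simp only [kraw]
  rw [h]
  simp only [mul_ite, mul_one, mul_zero]
  rw [← sum_filter, filter_filter]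
  rw [sum_congr rfl (g := fun _ => ((univ.filter (· ∈ K)).card : ℤ) * e), sum_const, nsmul_eq_mul,
    mul_comm]
  · congr 2
    rw [cosetCount]
    congr 1
    ext v
    simp [eq_comm]
  · intro v hv
    simp only [mem_filter, mem_univ, true_and] at hv
    rw [he v hv.1 hv.2.symm]

theorem one_mem_of_selfDual (K : Submodule (ZMod 2) (ι → ZMod 2)) (hK : IsSelfDual K) :
    (1 : ι → ZMod 2) ∈ K := by
  rw [hK]
  intro c hc
  have h2 : c ∈ dualCode K := hK ▸ hc
  have := h2 c hc
  rw [← this]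
  refine sum_congr rfl fun i _ => ?_
  have := congrFun (self_mul_F2 c) i
  simp only [Pi.mul_apply] at this
  simp [this]

open Classical in
theorem cosetCount_symm (K : Submodule (ZMod 2) (ι → ZMod 2)) (hK : IsSelfDual K)
    (s : ι → ZMod 2) (j j' : ℕ) (hj : j + j' = Fintype.card ι) :
    cosetCount K s j = cosetCount K s j' := by
  have h1 := one_mem_of_selfDual K hK
  have key : ∀ v : ι → ZMod 2, v + s ∈ K → v + 1 + s ∈ K := by
    intro v hv
    have := K.add_mem hv h1
    rwa [add_right_comm] at this
  rw [cosetCount, cosetCount]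
  refine card_nbij' (fun v => v + 1) (fun v => v + 1) ?_ ?_ ?_ ?_
  · intro v hv
    simp only [coe_filter, mem_univ, true_and, Set.mem_ofPred_eq] at hv ⊢
    have := hn_one_add v
    exact ⟨key v hv.1, by omega⟩
  · intro v hv
    simp only [coe_filter, mem_univ, true_and, Set.mem_ofPred_eq] at hv ⊢
    have := hn_one_add v
    exact ⟨key v hv.1, by omega⟩
  · intro v _; simp only; rw [add_assoc, add_self_F2, add_zero]
  · intro v _; simp only; rw [add_assoc, add_self_F2, add_zero]

theorem ncard_cosetCount (K : Submodule (ZMod 2) (ι → ZMod 2)) (j : ℕ) :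
    {v | v ∈ K ∧ hammingNorm v = j}.ncard = cosetCount K 0 j := by
  classical
  rw [cosetCount, ← Set.ncard_coe_finset]
  congr 1
  ext v
  simp

theorem cosetCount_ne (K : Submodule (ZMod 2) (ι → ZMod 2)) (s : ι → ZMod 2) (j : ℕ)
    (h : cosetCount K s j = 0) (v : ι → ZMod 2) (hv : v + s ∈ K) : hammingNorm v ≠ j := by
  classical
  intro hvj
  rw [cosetCount, card_eq_zero, filter_eq_empty_iff] at h
  exact h (mem_univ v) ⟨hv, hvj⟩

theorem cosetCount_eq_zero (K : Submodule (ZMod 2) (ι → ZMod 2)) (s : ι → ZMod 2) (j : ℕ)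
    (h : ∀ v : ι → ZMod 2, v + s ∈ K → hammingNorm v ≠ j) : cosetCount K s j = 0 := by
  classical
  rw [cosetCount, card_eq_zero, filter_eq_empty_iff]
  rintro v - ⟨h1, h2⟩
  exact h v h1 h2

theorem cosetCount_zero (K : Submodule (ZMod 2) (ι → ZMod 2)) : cosetCount K 0 0 = 1 := by
  classical
  rw [cosetCount, card_eq_one]
  refine ⟨0, ?_⟩
  ext v
  simp only [mem_filter, mem_univ, true_and, hammingNorm_eq_zero, mem_singleton]
  constructor
  · exact fun h => h.2
  · rintro rfl
    exact ⟨by rw [add_zero]; exact Submodule.zero_mem _, rfl⟩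

theorem chi_dot (s c : ι → ZMod 2) (h : hammingNorm c % 4 = 2 * hammingNorm (s * c) % 4) :
    chi (∑ i, s i * c i) = if hammingNorm c % 4 = 0 then 1 else -1 := by
  have h2 := hn_cast (s * c)
  have h3 : ∑ i, s i * c i = ∑ i, (s * c) i := rfl
  rw [h3, ← h2, chi]
  have h4 : (((hammingNorm (s * c) : ℕ) : ZMod 2) = 0) ↔ hammingNorm c % 4 = 0 := by
    rw [ZMod.natCast_eq_zero_iff]; omega
  simp only [h4]

theorem coset_weight (s v : ι → ZMod 2)
    (h : hammingNorm (v + s) % 4 = 2 * hammingNorm (s * (v + s)) % 4) :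
    hammingNorm v % 4 = hammingNorm s % 4 := by
  have h4 := hn_add s (v + s)
  have h5 : s + (v + s) = v := by
    rw [add_comm v, ← add_assoc, add_self_F2, zero_add]
  rw [h5] at h4
  omega

end Generic
section Linear

open Finset

set_option maxHeartbeats 4000000 in
theorem linear_solve (B : ℕ → ℕ) (a : ℕ → ℤ)
    (hmod : ∀ j, j % 4 ≠ 2 → B j = 0) (hsymm : ∀ j ≤ 68, B j = B (68 - j))
    (h2 : B 2 = 0) (h6 : B 6 = 6) (h10 : B 10 = 47)
    (h : ∀ k, ∑ j ∈ range 69, (B j : ℤ) * kraw 68 k j = 2 ^ 34 * a k)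
    (a0 : a 0 = 1) (a2 : a 2 = 0) (a4 : a 4 = 0) (a6 : a 6 = 0) (a8 : a 8 = 0) (a10 : a 10 = 0) :
    a 12 = 966 ∧ a 14 = -12376 := by
  have key : ∀ k, 2 ^ 34 * a k = 6 * (kraw 68 k 6 + kraw 68 k 62) +
      47 * (kraw 68 k 10 + kraw 68 k 58) + B 14 * (kraw 68 k 14 + kraw 68 k 54) +
      B 18 * (kraw 68 k 18 + kraw 68 k 50) + B 22 * (kraw 68 k 22 + kraw 68 k 46) +
      B 26 * (kraw 68 k 26 + kraw 68 k 42) + B 30 * (kraw 68 k 30 + kraw 68 k 38) +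
      B 34 * kraw 68 k 34 := by
    intro k
    rw [← h k]
    have hz : ∀ j, j % 4 ≠ 2 → (B j : ℤ) * kraw 68 k j = 0 := fun j hj => by simp [hmod j hj]
    have : ∑ j ∈ range 69, (B j : ℤ) * kraw 68 k j =
        ∑ i ∈ range 17, (B (4 * i + 2) : ℤ) * kraw 68 k (4 * i + 2) := by
      symm
      refine sum_of_injOn (fun i => 4 * i + 2) ?_ ?_ ?_ ?_
      · intro x _ y _ hxy; simp only at hxy; omega
      · intro x hx; simp at hx ⊢; omega
      · intro j hj hj'
        apply hz
        intro h4
        apply hj'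
        refine ⟨j / 4, ?_, ?_⟩
        · simp at hj ⊢; omega
        · simp only; omega
      · intro i _; rfl
    rw [this]
    have s2 : B 66 = 0 := by rw [← h2]; exact (hsymm 2 (by norm_num)).symm
    have s6 : B 62 = 6 := by rw [← h6]; exact (hsymm 6 (by norm_num)).symm
    have s10 : B 58 = 47 := by rw [← h10]; exact (hsymm 10 (by norm_num)).symm
    have s14 : B 54 = B 14 := (hsymm 14 (by norm_num)).symm
    have s18 : B 50 = B 18 := (hsymm 18 (by norm_num)).symm
    have s22 : B 46 = B 22 := (hsymm 22 (by norm_num)).symm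
    have s26 : B 42 = B 26 := (hsymm 26 (by norm_num)).symm
    have s30 : B 38 = B 30 := (hsymm 30 (by norm_num)).symm
    simp only [sum_range_succ, sum_range_zero, Nat.reduceMul, Nat.reduceAdd, h2, h6, h10, s2, s6,
      s10, s14, s18, s22, s26, s30]
    push_cast
    ring
  have k0 := key 0
  have k2 := key 2
  have k4 := key 4
  have k6 := key 6
  have k8 := key 8
  have k10 := key 10
  have k12 := key 12
  have k14 := key 14
  rw [a0] at k0
  rw [a2] at k2
  rw [a4] at k4
  rw [a6] at k6
  rw [a8] at k8
  rw [a10] at k10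
  clear key h hmod hsymm
  simp only [kraw_eq] at *
  norm_num [sum_range_succ, Nat.choose] at k0 k2 k4 k6 k8 k10 k12 k14
  constructor <;> linarith

end Linear
section Code

open Finset Matrix

variable {n : ℕ}

/-- left half -/
def lh (v : Fin (n + n) → ZMod 2) : Fin n → ZMod 2 := fun i => v (Fin.castAdd n i)

/-- right half -/
def rh (v : Fin (n + n) → ZMod 2) : Fin n → ZMod 2 := fun i => v (Fin.natAdd n i)

theorem lh_append (a b : Fin n → ZMod 2) : lh (Fin.append a b) = a := by
  ext i; simp [lh]

theorem rh_append (a b : Fin n → ZMod 2) : rh (Fin.append a b) = b := by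
  ext i; exact Fin.append_right a b i

theorem append_lh_rh (v : Fin (n + n) → ZMod 2) : Fin.append (lh v) (rh v) = v := by
  ext i
  refine Fin.addCases (fun i => ?_) (fun i => ?_) i
  · rw [Fin.append_left]; rfl
  · rw [Fin.append_right]; rfl

theorem hn_halves (v : Fin (n + n) → ZMod 2) :
    hammingNorm v = hammingNorm (lh v) + hammingNorm (rh v) := by
  simp only [hn_eq_sum, Fin.sum_univ_add]; rfl

/-- The code with generator matrix `[I | A]`. -/
def genCode (A : Matrix (Fin n) (Fin n) (ZMod 2)) : Submodule (ZMod 2) (Fin (n + n) → ZMod 2) where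
  carrier := {v | rh v = lh v ᵥ* A}
  add_mem' := by
    intro a b ha hb
    have ha' : rh a = lh a ᵥ* A := ha
    have hb' : rh b = lh b ᵥ* A := hb
    change rh a + rh b = (lh a + lh b) ᵥ* A
    rw [ha', hb', add_vecMul]
  zero_mem' := by
    change (0 : Fin n → ZMod 2) = (0 : Fin n → ZMod 2) ᵥ* A
    rw [zero_vecMul]
  smul_mem' := by
    intro r a ha
    have ha' : rh a = lh a ᵥ* A := ha
    change r • rh a = (r • lh a) ᵥ* A
    rw [ha', smul_vecMul]

theorem mem_genCode (A : Matrix (Fin n) (Fin n) (ZMod 2)) (v : Fin (n + n) → ZMod 2) :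
    v ∈ genCode A ↔ rh v = lh v ᵥ* A := Iff.rfl

theorem dot_halves (v w : Fin (n + n) → ZMod 2) :
    ∑ i, v i * w i = lh v ⬝ᵥ lh w + rh v ⬝ᵥ rh w := by
  simp only [Fin.sum_univ_add, dotProduct]; rfl

theorem F2_add_self (b : ZMod 2) : b + b = 0 := by revert b; decide

theorem genCode_selfDual (A : Matrix (Fin n) (Fin n) (ZMod 2)) (hA : A * Aᵀ = 1) :
    IsSelfDual (genCode A) := by
  have hA' : Aᵀ * A = 1 := mul_eq_one_comm.1 hA
  apply le_antisymm
  · intro v hv w hw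
    rw [mem_genCode] at hv hw
    rw [dot_halves, hv, hw, ← dotProduct_mulVec, ← vecMul_transpose, vecMul_vecMul, hA, vecMul_one]
    exact F2_add_self _
  · intro v hv
    rw [mem_genCode]
    have h1 : lh v + A *ᵥ rh v = 0 := by
      apply dotProduct_eq_zero
      intro u
      have h2 := hv (Fin.append u (u ᵥ* A)) (by rw [mem_genCode, lh_append, rh_append])
      rw [dot_halves, lh_append, rh_append] at h2
      rw [add_dotProduct, ← h2, dotProduct_comm (rh v), ← dotProduct_mulVec, dotProduct_comm u]
    have h3 : lh v = A *ᵥ rh v := by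
      have := congrArg (· + A *ᵥ rh v) h1
      simpa [add_assoc, add_self_F2] using this
    rw [h3, ← vecMul_transpose, vecMul_vecMul, hA', vecMul_one]

open Classical in
theorem genCode_card (A : Matrix (Fin n) (Fin n) (ZMod 2)) :
    (univ.filter (· ∈ genCode A)).card = 2 ^ n := by
  have : (univ.filter (· ∈ genCode A)).card = (univ : Finset (Fin n → ZMod 2)).card := by
    refine card_nbij' (fun v => lh v) (fun u => Fin.append u (u ᵥ* A)) ?_ ?_ ?_ ?_
    · intro v _; simp
    · intro u _
      simp only [coe_filter, mem_univ, true_and, Set.mem_ofPred_eq]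
      rw [mem_genCode, lh_append, rh_append]
    · intro v hv
      simp only [coe_filter, mem_univ, true_and, Set.mem_ofPred_eq] at hv
      rw [mem_genCode] at hv
      simp only
      rw [← hv, append_lh_rh]
    · intro u _; simp only; rw [lh_append]
  rw [this, card_univ]; simp [ZMod.card]

/-- number of vectors `x` of weight `k` with `t + x A` of weight `m` -/
def vcount {p q : ℕ} (W : Matrix (Fin p) (Fin q) (ZMod 2)) (t : Fin q → ZMod 2) (k m : ℕ) : ℕ :=
  (univ.filter (fun x : Fin p → ZMod 2 => hammingNorm x = k ∧ hammingNorm (t + x ᵥ* W) = m)).card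

open Classical in
theorem cosetCount_eq (A : Matrix (Fin n) (Fin n) (ZMod 2)) (hA : A * Aᵀ = 1)
    (s : Fin (n + n) → ZMod 2) (hs : rh s = 0) (m : ℕ) :
    cosetCount (genCode A) s (2 * m) =
      ∑ k ∈ range (m + 1), vcount A (lh s ᵥ* A) k (2 * m - k) +
      ∑ k ∈ range m, vcount Aᵀ (lh s) k (2 * m - k) := by
  have hA' : Aᵀ * A = 1 := mul_eq_one_comm.1 hA
  have hmemL : ∀ v, v + s ∈ genCode A ↔ rh v = lh s ᵥ* A + lh v ᵥ* A := by
    intro v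
    rw [mem_genCode]
    change rh v + rh s = (lh v + lh s) ᵥ* A ↔ _
    rw [hs, add_zero, add_vecMul, add_comm]
  have hmemR : ∀ v, v + s ∈ genCode A ↔ lh v = lh s + rh v ᵥ* Aᵀ := by
    intro v
    rw [hmemL]
    constructor
    · intro h
      rw [h, add_vecMul, vecMul_vecMul, vecMul_vecMul, hA, vecMul_one, vecMul_one, ← add_assoc,
        add_self_F2, zero_add]
    · intro h
      rw [h, add_vecMul, vecMul_vecMul, hA', vecMul_one, ← add_assoc, add_self_F2, zero_add]
  have hsplit : cosetCount (genCode A) s (2 * m) =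
      (univ.filter (fun v => (v + s ∈ genCode A ∧ hammingNorm v = 2 * m) ∧
        hammingNorm (lh v) < m + 1)).card +
      (univ.filter (fun v => (v + s ∈ genCode A ∧ hammingNorm v = 2 * m) ∧
        hammingNorm (rh v) < m)).card := by
    rw [cosetCount, ← card_filter_add_card_filter_not (fun v => hammingNorm (lh v) < m + 1),
      filter_filter, filter_filter]
    congr 2
    ext v
    simp only [mem_filter, mem_univ, true_and]
    have := hn_halves v
    constructor
    · rintro ⟨h1, h2⟩; exact ⟨h1, by omega⟩
    · rintro ⟨h1, h2⟩; exact ⟨h1, by omega⟩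
  rw [hsplit]
  congr 1
  · rw [card_eq_sum_card_fiberwise (f := fun v => hammingNorm (lh v)) (t := range (m + 1))
      (by intro v hv; simp at hv ⊢; omega)]
    refine sum_congr rfl fun k hk => ?_
    rw [mem_range] at hk
    rw [vcount]
    refine card_nbij' (fun v => lh v) (fun u => Fin.append u (lh s ᵥ* A + u ᵥ* A)) ?_ ?_ ?_ ?_
    · intro v hv
      simp only [coe_filter, mem_filter, mem_univ, true_and, Set.mem_ofPred_eq] at hv ⊢
      obtain ⟨⟨⟨h1, h2⟩, h3⟩, h4⟩ := hv
      refine ⟨h4, ?_⟩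
      rw [← (hmemL v).1 h1]
      have := hn_halves v
      omega
    · intro u hu
      simp only [coe_filter, mem_filter, mem_univ, true_and, Set.mem_ofPred_eq] at hu ⊢
      rw [hmemL, hn_halves, lh_append, rh_append, hu.1, hu.2]
      exact ⟨⟨⟨rfl, by omega⟩, hk⟩, rfl⟩
    · intro v hv
      simp only [coe_filter, mem_filter, mem_univ, true_and, Set.mem_ofPred_eq] at hv
      simp only
      rw [← (hmemL v).1 hv.1.1.1, append_lh_rh]
    · intro u _; simp only; rw [lh_append]
  · rw [card_eq_sum_card_fiberwise (f := fun v => hammingNorm (rh v)) (t := range m)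
      (by intro v hv; simp at hv ⊢; omega)]
    refine sum_congr rfl fun k hk => ?_
    rw [mem_range] at hk
    rw [vcount]
    refine card_nbij' (fun v => rh v) (fun u => Fin.append (lh s + u ᵥ* Aᵀ) u) ?_ ?_ ?_ ?_
    · intro v hv
      simp only [coe_filter, mem_filter, mem_univ, true_and, Set.mem_ofPred_eq] at hv ⊢
      obtain ⟨⟨⟨h1, h2⟩, h3⟩, h4⟩ := hv
      refine ⟨h4, ?_⟩
      rw [← (hmemR v).1 h1]
      have := hn_halves v
      omega
    · intro u hu
      simp only [coe_filter, mem_filter, mem_univ, true_and, Set.mem_ofPred_eq] at hu ⊢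
      rw [hmemR, hn_halves, lh_append, rh_append, hu.1, hu.2]
      exact ⟨⟨⟨rfl, by omega⟩, hk⟩, rfl⟩
    · intro v hv
      simp only [coe_filter, mem_filter, mem_univ, true_and, Set.mem_ofPred_eq] at hv
      simp only
      rw [← (hmemR v).1 hv.1.1.1, append_lh_rh]
    · intro u _; simp only; rw [rh_append]

/-- The weight of a codeword modulo 4 is governed by the characteristic vector `s`. -/
theorem weight_mod_four (A : Matrix (Fin n) (Fin n) (ZMod 2)) (hA : A * Aᵀ = 1)
    (s : Fin (n + n) → ZMod 2)
    (hG : ∀ i, hammingNorm (Fin.append (Pi.single i 1) (A i)) % 4 =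
      2 * hammingNorm (s * Fin.append (Pi.single i 1) (A i)) % 4)
    (c : Fin (n + n) → ZMod 2) (hc : c ∈ genCode A) :
    hammingNorm c % 4 = 2 * hammingNorm (s * c) % 4 := by
  have hsd := genCode_selfDual A hA
  have hrow : ∀ i, Fin.append (Pi.single i 1) (A i) ∈ genCode A := by
    intro i
    rw [mem_genCode, lh_append, rh_append, single_one_vecMul]; rfl
  have hlh : ∀ (S : Finset (Fin n)) (f : Fin n → Fin (n + n) → ZMod 2),
      lh (∑ i ∈ S, f i) = ∑ i ∈ S, lh (f i) := by
    intro S f; ext j; simp [lh]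
  have hdec : c = ∑ i, lh c i • Fin.append (Pi.single i 1) (A i) := by
    have hm : (∑ i, lh c i • Fin.append (Pi.single i (1 : ZMod 2)) (A i)) ∈ genCode A :=
      Submodule.sum_mem _ fun i _ => Submodule.smul_mem _ _ (hrow i)
    have hl : lh (∑ i, lh c i • Fin.append (Pi.single i (1 : ZMod 2)) (A i)) = lh c := by
      rw [hlh]
      have : ∀ i, lh (lh c i • Fin.append (Pi.single i (1 : ZMod 2)) (A i)) =
          Pi.single i (lh c i) := by
        intro i
        change lh c i • lh (Fin.append (Pi.single i (1 : ZMod 2)) (A i)) = _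
        rw [lh_append, ← Pi.single_smul]; simp
      simp only [this]
      exact univ_sum_single _
    have hr : rh (∑ i, lh c i • Fin.append (Pi.single i (1 : ZMod 2)) (A i)) = rh c := by
      rw [(mem_genCode A _).1 hm, (mem_genCode A _).1 hc, hl]
    have h5 := append_lh_rh (∑ i, lh c i • Fin.append (Pi.single i (1 : ZMod 2)) (A i))
    rw [hl, hr, append_lh_rh] at h5
    exact h5
  have key : c ∈ genCode A ∧ hammingNorm c % 4 = 2 * hammingNorm (s * c) % 4 := by
    rw [hdec]
    refine sum_induction _ (fun c => c ∈ genCode A ∧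
      hammingNorm c % 4 = 2 * hammingNorm (s * c) % 4) ?_ ?_ ?_
    · rintro a b ⟨ha, ha'⟩ ⟨hb, hb'⟩
      refine ⟨Submodule.add_mem _ ha hb, ?_⟩
      have h1 := hn_add a b
      have h2 := hn_add (s * a) (s * b)
      rw [← mul_add] at h2
      have h3 : 2 ∣ hammingNorm (a * b) := by
        apply even_hn
        have : a ∈ dualCode (genCode A) := hsd ▸ ha
        exact this b hb
      omega
    · refine ⟨Submodule.zero_mem _, ?_⟩
      rw [mul_zero, hammingNorm_zero]
    · intro i _
      rcases F2.cases (lh c i) with h | h <;> rw [h]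
      · rw [zero_smul]
        refine ⟨Submodule.zero_mem _, ?_⟩
        rw [mul_zero, hammingNorm_zero]
      · rw [one_smul]; exact ⟨hrow i, hG i⟩
  exact key.2

end Code

/-- Rows of `A`, as bit masks. -/
def rowBits : List Nat :=
  [nat_lit 5970925055,
   nat_lit 7631505631,
   nat_lit 465792895,
   nat_lit 16915180031,
   nat_lit 14872526591,
   nat_lit 757703807,
   nat_lit 15679775809,
   nat_lit 1260482817,
   nat_lit 11402423809,
   nat_lit 12863923425,
   nat_lit 15589842561,
   nat_lit 12594039522,
   nat_lit 6027971714,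
   nat_lit 9286477858,
   nat_lit 4456805794,
   nat_lit 3159530178,
   nat_lit 1432520676,
   nat_lit 311337060,
   nat_lit 14453422052,
   nat_lit 3450448036,
   nat_lit 16150821348,
   nat_lit 5833119208,
   nat_lit 3809445544,
   nat_lit 2626927688,
   nat_lit 10608021320,
   nat_lit 14124982632,
   nat_lit 7199769488,
   nat_lit 14899408016,
   nat_lit 2685488752,
   nat_lit 8837017136,
   nat_lit 1846251120,
   nat_lit 11928840032,
   nat_lit 711247040,
   nat_lit 4606958656]

/-- Rows of `A`, with the bits spread out in base 64. -/
def rowsA : List Nat :=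
  [nat_lit 6278658176171822584624196624015334213994636561846422999105,
   nat_lit 6376713945635734993549981296870068320111781417128282034241,
   nat_lit 379991875608366324826388108538377607858126477070401,
   nat_lit 408111249329677777611430584563571385678406537092213741195329,
   nat_lit 408013169615155131829966055616759579676331706871146300575809,
   nat_lit 23951180198732000494845996045552171681775455928848449,
   nat_lit 408109716460085264014251019244302971852753782286276834099201,
   nat_lit 1532501388321986704945102155571889883516452763999404033,
   nat_lit 401832614724698605551244169391013551833710868045967323561985,
   nat_lit 401834147600229874845393438262078647109798538187588266622977,
   nat_lit 408109716459992514866606277692015433670463473471498282336257,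
   nat_lit 401834147226085455688680961644350388657058734124997869043776,
   nat_lit 6278658176263166088423184187372564130865373125557742469184,
   nat_lit 401734535015836424113521889189460390610755827722788899127360,
   nat_lit 6277101741232709962438814270014569955756281382159863775296,
   nat_lit 98104039940012480262133328058346496646218136149534179392,
   nat_lit 1532869776651204177473837718429694548323687004794523648,
   nat_lit 374145846752853017845843190488754399332315898580992,
   nat_lit 408013145675756907402828748335741884854231872486126055854080,
   nat_lit 99612216093655826729519280629503012094137844849268756480,
   nat_lit 408111225010291960021346546113183286523623999412914299604992,
   nat_lit 6278634610919422255701046411244903801755515135127172939776,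
   nat_lit 99636155400558353744629995298325443408813398537437184000,
   nat_lit 98080094697186793753347335271246908893682528531995951104,
   nat_lit 401736067885521686515341590654451072326901962090665340043264,
   nat_lit 408013145301521144742232234022727621682650449650340738629632,
   nat_lit 6375205401182296382771197714824519058208564316847843835904,
   nat_lit 408013169620908367273734170670723467987595917215869261840384,
   nat_lit 98103659858242916449675286984951432607833237606918782976,
   nat_lit 401734511070686346883375586471399221510194287721064156889088,
   nat_lit 1556446722469567721290035621480094495901402517913731072,
   nat_lit 401834123274996645062054901570098419656917549765826963308544,
   nat_lit 23951090259832059318268853157812975691910794218307584,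
   nat_lit 6277102109532527516690136167457485463955865671708102885376]

/-- Columns of `A`, with the bits spread out in base 64. -/
def colsA : List Nat :=
  [nat_lit 1171221845949812801,
   nat_lit 1257589880007577164562305089,
   nat_lit 1350326851603277037326655783065358401,
   nat_lit 1449902416636680010436439463157524395861479489,
   nat_lit 1556820865461476739710361545236341042965581193015464001,
   nat_lit 99636529544955215241496215278317735289652367762567467009,
   nat_lit 408111225384436401478804200492347232420845841675344102559809,
   nat_lit 6277101741324031171023521312657644244066225241786966868033,
   nat_lit 98079714708210287792420276953370606976941554178764050433,
   nat_lit 99636529634894120540749624425293510116915853956644605952,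
   nat_lit 408111249335523806815391706692120622195374251770837718798337,
   nat_lit 401736067885521709159092744269296742094014281871775666278464,
   nat_lit 401734511064747569234026066956577467690065372838147464888321,
   nat_lit 98103665705677061915157745419097974230422286763158671360,
   nat_lit 6277102115468450322290129408279492401237829435537416523776,
   nat_lit 408111225016227905481416608625717541535998869587477806448704,
   nat_lit 99612584392068439477831499396753173195733446695110053953,
   nat_lit 99636161337886808634935665677902365361001753297922560064,
   nat_lit 6277101735386680769365378215262092151766423956564419280961,
   nat_lit 401736067505532710357831136561231925135603307455140419862592,
   nat_lit 401734535389980820969487837718981784545328108708572875194432,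
   nat_lit 6277125680722277893461509578160009062575891404919664803841,
   nat_lit 6277101735388130312273694238310886003492720571856048885825,
   nat_lit 401734535009991822511232205215369070443677343190615509176385,
   nat_lit 98079714708187992490431158256894017065247529158181916673,
   nat_lit 408111248955533358460163934609967023720031146519221040582721,
   nat_lit 99636155490453006089050659152240114143540162717422714944,
   nat_lit 6278658182109172980836492627592251988720931817456501002240,
   nat_lit 401734511070593598084093547937169374861388806956081838559232,
   nat_lit 6278634611009338517251804336939998731764658310671551954945,
   nat_lit 99612216003738879085747504329960161688490163586004680769,
   nat_lit 98080088851180249874274297229126262372073256568064573504,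
   nat_lit 401734511070686346534926422294618771087132205188770844377153,
   nat_lit 98103665705699014211191774743197040491491256355415916544]

/-- Right half of the reduced shadow vector, spread. -/
def shT : Nat := nat_lit 374235785658239999978271445960866659019610950467584

/-- Left half of the shadow vector, spread. -/
def shL : Nat := nat_lit 1090785345
/-- The number of ways to choose `k` entries of `l` whose XOR with `acc` has digit sum `n`
(modulo 63). Written with recursors so that the kernel evaluates it quickly. -/
noncomputable def cnt (l : List Nat) : Nat → Nat → Nat → Nat :=
  List.rec (motive := fun _ => Nat → Nat → Nat → Nat)
    (fun k n acc => Nat.rec (motive := fun _ => Nat)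
      (Bool.rec (motive := fun _ => Nat) (nat_lit 0) (nat_lit 1) (Nat.beq (Nat.mod acc (nat_lit 63)) n)) (fun _ _ => nat_lit 0) k)
    (fun r _ ih k n acc => Nat.rec (motive := fun _ => Nat)
      (Bool.rec (motive := fun _ => Nat) (nat_lit 0) (nat_lit 1) (Nat.beq (Nat.mod acc (nat_lit 63)) n))
      (fun k' _ => Nat.add (ih k' n (Nat.xor acc r)) (ih (Nat.succ k') n acc)) k) l

section Spec

open Finset Matrix

/-- digits in base 64 -/
def enc {q : ℕ} (v : Fin q → ZMod 2) : ℕ := ∑ i, (v i).val * 64 ^ (i : ℕ)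

theorem enc_succ {q : ℕ} (v : Fin (q + 1) → ZMod 2) :
    enc v = 64 * enc (fun i => v i.succ) + (v 0).val := by
  rw [enc, Fin.sum_univ_succ, enc, mul_sum, add_comm]
  congr 1
  · refine sum_congr rfl fun i _ => ?_
    rw [Fin.val_succ, pow_succ]; ring
  · simp

theorem xor_digit (a b : ℕ) (c d : ZMod 2) :
    (64 * a + c.val) ^^^ (64 * b + d.val) = 64 * (a ^^^ b) + (c + d).val := by
  have hc : ∀ e : ZMod 2, e.val < 2 ^ 6 := by decide
  have h6 : (64 : ℕ) = 2 ^ 6 := rfl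
  rw [h6]
  apply Nat.eq_of_testBit_eq
  intro i
  rw [Nat.testBit_xor, Nat.testBit_two_pow_mul_add _ (hc _), Nat.testBit_two_pow_mul_add _ (hc _),
    Nat.testBit_two_pow_mul_add _ (hc _)]
  by_cases hi : i < 6
  · simp only [hi, if_true]
    rw [← Nat.testBit_xor]
    congr 1
    revert c d; decide
  · simp only [hi, if_false]
    rw [Nat.testBit_xor]

theorem enc_add {q : ℕ} (v w : Fin q → ZMod 2) : enc (v + w) = enc v ^^^ enc w := by
  induction q with
  | zero => simp [enc]
  | succ q ih =>
    rw [enc_succ v, enc_succ w, xor_digit, ← ih, enc_succ]; rfl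

theorem enc_mod {q : ℕ} (v : Fin q → ZMod 2) (hq : q < 63) : enc v % 63 = hammingNorm v := by
  have h : enc v ≡ hammingNorm v [MOD 63] := by
    rw [enc, hn_eq_sum]
    induction q with
    | zero => simp; rfl
    | succ q ih =>
      rw [Fin.sum_univ_castSucc, Fin.sum_univ_castSucc]
      refine Nat.ModEq.add (ih (fun i => v i.castSucc) (by omega)) ?_
      have : 64 ^ q ≡ 1 ^ q [MOD 63] := Nat.ModEq.pow _ rfl
      have := Nat.ModEq.mul_left (v (Fin.last q)).val this
      simpa using this
  have h2 : hammingNorm v < 63 := by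
    have := hn_le v
    rw [Fintype.card_fin] at this; omega
  have h3 : enc v % 63 = hammingNorm v % 63 := h
  rw [h3, Nat.mod_eq_of_lt h2]

theorem leaf_eq (a n : ℕ) : (Bool.rec (motive := fun _ => Nat) (nat_lit 0) (nat_lit 1)
    (Nat.beq (Nat.mod a (nat_lit 63)) n) : ℕ) = if a % 63 = n then 1 else 0 := by
  by_cases h : a % 63 = n
  · have h1 : Nat.beq (Nat.mod a 63) n = true := by rw [Nat.beq_eq]; exact h
    rw [h1, if_pos h]
  · have h1 : Nat.beq (Nat.mod a 63) n = false := by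
      rw [← Bool.not_eq_true]; exact fun h2 => h (Nat.eq_of_beq_eq_true h2)
    rw [h1, if_neg h]

theorem cnt_nil_zero (n a : ℕ) : cnt [] 0 n a = if a % 63 = n then 1 else 0 := leaf_eq a n

theorem cnt_nil_succ (k n a : ℕ) : cnt [] (k + 1) n a = 0 := rfl

theorem cnt_cons_zero (r : ℕ) (l : List ℕ) (n a : ℕ) :
    cnt (r :: l) 0 n a = if a % 63 = n then 1 else 0 := leaf_eq a n

theorem cnt_cons_succ (r : ℕ) (l : List ℕ) (k n a : ℕ) :
    cnt (r :: l) (k + 1) n a = cnt l k n (a ^^^ r) + cnt l (k + 1) n a := rfl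

theorem hn_cons {p : ℕ} (b : ZMod 2) (x : Fin p → ZMod 2) :
    hammingNorm (Fin.cons b x : Fin (p + 1) → ZMod 2) = b.val + hammingNorm x := by
  simp only [hn_eq_sum, Fin.sum_univ_succ, Fin.cons_zero, Fin.cons_succ]

theorem vcount_succ {p q : ℕ} (W : Fin (p + 1) → Fin q → ZMod 2) (t : Fin q → ZMod 2) (k m : ℕ) :
    vcount (Matrix.of W) t (k + 1) m =
      vcount (Matrix.of fun i : Fin p => W i.succ) (t + W 0) k m +
      vcount (Matrix.of fun i : Fin p => W i.succ) t (k + 1) m := by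
  simp only [vcount, card_filter]
  rw [← (Fin.consEquiv (fun _ : Fin (p + 1) => ZMod 2)).sum_comp, Fintype.sum_prod_type]
  have e : ∀ f : ZMod 2 → ℕ, ∑ b, f b = f 1 + f 0 := fun f => by
    rw [add_comm]; exact Fin.sum_univ_two f
  rw [e]
  have hv : ∀ (b : ZMod 2) (x : Fin p → ZMod 2),
      (Fin.cons b x : Fin (p + 1) → ZMod 2) ᵥ* Matrix.of W =
        b • W 0 + x ᵥ* Matrix.of (fun i : Fin p => W i.succ) := by
    intro b x
    ext j
    simp [vecMul, dotProduct, Fin.sum_univ_succ]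
  have hce : ∀ (b : ZMod 2) (x : Fin p → ZMod 2),
      (Fin.consEquiv (fun _ : Fin (p + 1) => ZMod 2)) (b, x) = Fin.cons b x := fun _ _ => rfl
  congr 1
  · refine sum_congr rfl fun x _ => ?_
    rw [hce]
    rw [hn_cons, hv, one_smul, ← add_assoc, ZMod.val_one, add_comm 1]
    simp only [Nat.add_right_cancel_iff]
  · refine sum_congr rfl fun x _ => ?_
    rw [hce]
    rw [hn_cons, hv, zero_smul, zero_add, ZMod.val_zero, zero_add]

theorem vcount_zero {p q : ℕ} (W : Matrix (Fin p) (Fin q) (ZMod 2)) (t : Fin q → ZMod 2) (m : ℕ) :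
    vcount W t 0 m = if hammingNorm t = m then 1 else 0 := by
  rw [vcount]
  split_ifs with h
  · rw [card_eq_one]
    refine ⟨0, ?_⟩
    ext x
    simp only [mem_filter, mem_univ, true_and, hammingNorm_eq_zero, mem_singleton]
    constructor
    · exact fun h => h.1
    · rintro rfl
      rw [zero_vecMul, add_zero]; exact ⟨rfl, h⟩
  · rw [card_eq_zero]
    ext x
    simp only [mem_filter, mem_univ, true_and, hammingNorm_eq_zero, notMem_empty, iff_false]
    rintro ⟨rfl, h2⟩
    rw [zero_vecMul, add_zero] at h2; exact h h2

theorem cnt_spec {q : ℕ} (hq : q < 63) {p : ℕ} (W : Fin p → Fin q → ZMod 2) :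
    ∀ (t : Fin q → ZMod 2) (k m : ℕ),
    cnt (List.ofFn fun i => enc (W i)) k m (enc t) = vcount (Matrix.of W) t k m := by
  induction p with
  | zero =>
    intro t k m
    rw [List.ofFn_zero]
    cases k with
    | zero => rw [cnt_nil_zero, vcount_zero, enc_mod _ hq]
    | succ k =>
      rw [cnt_nil_succ, vcount]
      symm
      rw [card_eq_zero]
      ext x
      simp [hn_eq_sum]
  | succ p ih =>
    intro t k m
    rw [List.ofFn_succ]
    cases k with
    | zero => rw [cnt_cons_zero, vcount_zero, enc_mod _ hq]
    | succ k => rw [cnt_cons_succ, vcount_succ, ← enc_add, ih, ih]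

end Spec
section Concrete

open Finset Matrix

/-- The matrix `A` of the generator matrix `[I | A]`. -/
def matA : Matrix (Fin 34) (Fin 34) (ZMod 2) :=
  Matrix.of fun i j => if (rowBits.getD i 0).testBit j then 1 else 0

/-- A weight 6 vector of the shadow. -/
def shadowVec : Fin (34 + 34) → ZMod 2 := fun i => if (i : ℕ) < 6 then 1 else 0

theorem matA_orth : matA * matAᵀ = 1 := by decide +kernel

theorem rowsA_eq : (List.ofFn fun i => enc (matA i)) = rowsA := by decide +kernel

theorem colsA_eq : (List.ofFn fun i => enc (matAᵀ i)) = colsA := by decide +kernel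

theorem shT_eq : enc (lh shadowVec ᵥ* matA) = shT := by decide +kernel

theorem shL_eq : enc (lh shadowVec) = shL := by decide +kernel

theorem rh_shadow : rh shadowVec = 0 := by decide +kernel

theorem gen_weights : ∀ i, hammingNorm (Fin.append (Pi.single i 1) (matA i)) % 4 =
      2 * hammingNorm (shadowVec * Fin.append (Pi.single i 1) (matA i)) % 4 := by decide +kernel

theorem shadow_weight : hammingNorm shadowVec = 6 := by decide +kernel

end Concrete
section Totals

open Finset

/-- `∑ k < m, cnt l k (w - k) a`, in a form suited to the kernel. -/
noncomputable def tot (l : List Nat) (w a m : Nat) : Nat :=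
  Nat.rec (motive := fun _ => Nat) (nat_lit 0)
    (fun k ih => Nat.add ih (cnt l k (Nat.sub w k) a)) m

theorem tot_eq (l : List ℕ) (w a m : ℕ) : tot l w a m = ∑ k ∈ range m, cnt l k (w - k) a := by
  induction m with
  | zero => rfl
  | succ m ih => rw [sum_range_succ, ← ih]; rfl

theorem code_rows_1 : Nat.beq (tot rowsA (nat_lit 2) (nat_lit 0) (nat_lit 2)) (nat_lit 0) = true := by
  decide +kernel

theorem code_cols_1 : Nat.beq (tot colsA (nat_lit 2) (nat_lit 0) (nat_lit 1)) (nat_lit 0) = true := by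
  decide +kernel

theorem code_rows_2 : Nat.beq (tot rowsA (nat_lit 4) (nat_lit 0) (nat_lit 3)) (nat_lit 0) = true := by
  decide +kernel

theorem code_cols_2 : Nat.beq (tot colsA (nat_lit 4) (nat_lit 0) (nat_lit 2)) (nat_lit 0) = true := by
  decide +kernel

theorem code_rows_3 : Nat.beq (tot rowsA (nat_lit 6) (nat_lit 0) (nat_lit 4)) (nat_lit 0) = true := by
  decide +kernel

theorem code_cols_3 : Nat.beq (tot colsA (nat_lit 6) (nat_lit 0) (nat_lit 3)) (nat_lit 0) = true := by
  decide +kernel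

theorem code_rows_4 : Nat.beq (tot rowsA (nat_lit 8) (nat_lit 0) (nat_lit 5)) (nat_lit 0) = true := by
  decide +kernel

theorem code_cols_4 : Nat.beq (tot colsA (nat_lit 8) (nat_lit 0) (nat_lit 4)) (nat_lit 0) = true := by
  decide +kernel

theorem code_rows_5 : Nat.beq (tot rowsA (nat_lit 10) (nat_lit 0) (nat_lit 6)) (nat_lit 0) = true := by
  decide +kernel

theorem code_cols_5 : Nat.beq (tot colsA (nat_lit 10) (nat_lit 0) (nat_lit 5)) (nat_lit 0) = true := by
  decide +kernel

theorem shadow_rows_1 : Nat.beq (tot rowsA (nat_lit 2) shT (nat_lit 2)) (nat_lit 0) = true := by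
  decide +kernel

theorem shadow_cols_1 : Nat.beq (tot colsA (nat_lit 2) shL (nat_lit 1)) (nat_lit 0) = true := by
  decide +kernel

theorem shadow_rows_3 : Nat.beq (tot rowsA (nat_lit 6) shT (nat_lit 4)) (nat_lit 0) = true := by
  decide +kernel

theorem shadow_cols_3 : Nat.beq (tot colsA (nat_lit 6) shL (nat_lit 3)) (nat_lit 6) = true := by
  decide +kernel

theorem shadow_rows_5 : Nat.beq (tot rowsA (nat_lit 10) shT (nat_lit 6)) (nat_lit 30) = true := by
  decide +kernel

theorem shadow_cols_5 : Nat.beq (tot colsA (nat_lit 10) shL (nat_lit 5)) (nat_lit 17) = true := by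
  decide +kernel

end Totals
section Final

open Finset Matrix

attribute [local irreducible] tot cnt genCode matA shadowVec

theorem count_rows (t : Fin 34 → ZMod 2) (w m : ℕ) :
    ∑ k ∈ range m, vcount matA t k (w - k) = tot rowsA w (enc t) m := by
  rw [tot_eq]
  refine sum_congr rfl fun k _ => ?_
  rw [← rowsA_eq]
  exact (cnt_spec (by norm_num) matA t k (w - k)).symm

theorem count_cols (t : Fin 34 → ZMod 2) (w m : ℕ) :
    ∑ k ∈ range m, vcount matAᵀ t k (w - k) = tot colsA w (enc t) m := by
  rw [tot_eq]
  refine sum_congr rfl fun k _ => ?_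
  rw [← colsA_eq]
  exact (cnt_spec (by norm_num) matAᵀ t k (w - k)).symm

theorem shadow_count (m : ℕ) : cosetCount (genCode matA) shadowVec (2 * m) =
    tot rowsA (2 * m) shT (m + 1) + tot colsA (2 * m) shL m := by
  rw [cosetCount_eq matA matA_orth shadowVec rh_shadow, count_rows, count_cols, shT_eq, shL_eq]

theorem code_count (m : ℕ) : cosetCount (genCode matA) 0 (2 * m) =
    tot rowsA (2 * m) 0 (m + 1) + tot colsA (2 * m) 0 m := by
  have h0 : lh (0 : Fin (34 + 34) → ZMod 2) = 0 := rfl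
  have h1 : enc (0 : Fin 34 → ZMod 2) = 0 := by simp [enc]
  rw [cosetCount_eq matA matA_orth 0 rfl, count_rows, count_cols, h0, zero_vecMul, h1]

theorem shadow_val (m w m' r c : ℕ) (hw : 2 * m = w) (hm : m + 1 = m')
    (hr : Nat.beq (tot rowsA w shT m') r = true) (hc : Nat.beq (tot colsA w shL m) c = true) :
    cosetCount (genCode matA) shadowVec w = r + c := by
  subst hw hm
  rw [shadow_count, Nat.eq_of_beq_eq_true hr, Nat.eq_of_beq_eq_true hc]

theorem code_val (m w m' z : ℕ) (hz : z = 0) (hw : 2 * m = w) (hm : m + 1 = m')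
    (hr : Nat.beq (tot rowsA w z m') z = true) (hc : Nat.beq (tot colsA w z m) z = true) :
    cosetCount (genCode matA) 0 w = 0 := by
  subst hw hm hz
  rw [code_count, Nat.eq_of_beq_eq_true hr, Nat.eq_of_beq_eq_true hc]

theorem shadow_2 : cosetCount (genCode matA) shadowVec 2 = 0 :=
  shadow_val (nat_lit 1) (nat_lit 2) (nat_lit 2) (nat_lit 0) (nat_lit 0) rfl rfl
    shadow_rows_1 shadow_cols_1

theorem shadow_6 : cosetCount (genCode matA) shadowVec 6 = 6 :=
  shadow_val (nat_lit 3) (nat_lit 6) (nat_lit 4) (nat_lit 0) (nat_lit 6) rfl rfl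
    shadow_rows_3 shadow_cols_3

theorem shadow_10 : cosetCount (genCode matA) shadowVec 10 = 47 :=
  shadow_val (nat_lit 5) (nat_lit 10) (nat_lit 6) (nat_lit 30) (nat_lit 17) rfl rfl
    shadow_rows_5 shadow_cols_5

theorem code_2 : cosetCount (genCode matA) 0 2 = 0 :=
  code_val (nat_lit 1) (nat_lit 2) (nat_lit 2) (nat_lit 0) rfl rfl rfl
    code_rows_1 code_cols_1

theorem code_4 : cosetCount (genCode matA) 0 4 = 0 :=
  code_val (nat_lit 2) (nat_lit 4) (nat_lit 3) (nat_lit 0) rfl rfl rfl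
    code_rows_2 code_cols_2

theorem code_6 : cosetCount (genCode matA) 0 6 = 0 :=
  code_val (nat_lit 3) (nat_lit 6) (nat_lit 4) (nat_lit 0) rfl rfl rfl
    code_rows_3 code_cols_3

theorem code_8 : cosetCount (genCode matA) 0 8 = 0 :=
  code_val (nat_lit 4) (nat_lit 8) (nat_lit 5) (nat_lit 0) rfl rfl rfl
    code_rows_4 code_cols_4

theorem code_10 : cosetCount (genCode matA) 0 10 = 0 :=
  code_val (nat_lit 5) (nat_lit 10) (nat_lit 6) (nat_lit 0) rfl rfl rfl
    code_rows_5 code_cols_5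

theorem sd : IsSelfDual (genCode matA) := genCode_selfDual matA matA_orth

theorem wt_mod (c : Fin (34 + 34) → ZMod 2) (hc : c ∈ genCode matA) :
    hammingNorm c % 4 = 2 * hammingNorm (shadowVec * c) % 4 :=
  weight_mod_four matA matA_orth shadowVec gen_weights c hc

theorem shadow_mod (j : ℕ) (hj : j % 4 ≠ 2) : cosetCount (genCode matA) shadowVec j = 0 := by
  apply cosetCount_eq_zero
  intro v hv h2
  have h3 := coset_weight shadowVec v (wt_mod _ hv)
  rw [shadow_weight] at h3
  omega

open Classical in
theorem shadow_poisson (k : ℕ) :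
    ∑ j ∈ range 69, (cosetCount (genCode matA) shadowVec j : ℤ) * kraw 68 k j =
      2 ^ 34 * ((if k % 4 = 0 then 1 else -1) * (cosetCount (genCode matA) 0 k : ℤ)) := by
  have h := poisson_coeff (genCode matA) sd shadowVec k (if k % 4 = 0 then 1 else -1)
    (fun c hc hk => by rw [chi_dot shadowVec c (wt_mod c hc), hk])
  rw [genCode_card, Fintype.card_fin, mul_assoc, Nat.cast_pow, Nat.cast_ofNat] at h
  exact h

theorem counts_aux (b : ℕ → ℕ)
    (h : (if 12 % 4 = 0 then (1 : ℤ) else -1) * (b 12 : ℤ) = 966 ∧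
      (if 14 % 4 = 0 then (1 : ℤ) else -1) * (b 14 : ℤ) = -12376) :
    b 12 = 966 ∧ b 14 = 12376 := by
  norm_num at h
  omega

theorem aux_zero (e : ℤ) (b : ℕ) (h : b = 0) : e * (b : ℤ) = 0 := by rw [h]; simp

theorem aux_one (b : ℕ) (h : b = 1) : (if 0 % 4 = 0 then (1 : ℤ) else -1) * (b : ℤ) = 1 := by
  rw [h]; simp

theorem shadow_symm (j : ℕ) (hj : j ≤ 68) : cosetCount (genCode matA) shadowVec j =
    cosetCount (genCode matA) shadowVec (68 - j) :=
  cosetCount_symm _ sd _ _ _ (by rw [Fintype.card_fin]; omega)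

theorem counts : cosetCount (genCode matA) 0 12 = 966 ∧ cosetCount (genCode matA) 0 14 = 12376 :=
  counts_aux (cosetCount (genCode matA) 0) (linear_solve (cosetCount (genCode matA) shadowVec)
    (fun k => (if k % 4 = 0 then 1 else -1) * (cosetCount (genCode matA) 0 k : ℤ))
    shadow_mod shadow_symm shadow_2 shadow_6 shadow_10 shadow_poisson
    (aux_one _ (cosetCount_zero _)) (aux_zero _ _ code_2) (aux_zero _ _ code_4)
    (aux_zero _ _ code_6) (aux_zero _ _ code_8) (aux_zero _ _ code_10))

theorem ncard_eq (j : ℕ) : {v | v ∈ genCode matA ∧ hammingNorm v = j}.ncard =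
    cosetCount (genCode matA) 0 j := ncard_cosetCount _ j

theorem min_weight (v : Fin (34 + 34) → ZMod 2) (hv : v ∈ genCode matA) (h0 : v ≠ 0) :
    12 ≤ hammingNorm v := by
  have h1 := wt_mod v hv
  have hne : ∀ j, cosetCount (genCode matA) 0 j = 0 → hammingNorm v ≠ j :=
    fun j hj => cosetCount_ne _ 0 j hj v (by rw [add_zero]; exact hv)
  have h2 := hne _ code_2
  have h4 := hne _ code_4
  have h6 := hne _ code_6
  have h8 := hne _ code_8
  have h10 := hne _ code_10
  have hz : hammingNorm v ≠ 0 := hammingNorm_ne_zero_iff.2 h0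
  clear hne
  generalize hammingNorm v = w at *
  omega

end Final

/-- There exists a binary self-dual `[68, 34, 12]` code with weight enumerator
`W_{68,2}` (γ = 6, β = 131): minimum nonzero weight 12, exactly 966 codewords of weight 12
and exactly 12376 codewords of weight 14. -/
theorem exists_selfDual_68_17 :
    ∃ C : Submodule (ZMod 2) (Fin 68 → ZMod 2),
      IsSelfDual C ∧
      (∀ v ∈ C, v ≠ 0 → 12 ≤ hammingNorm v) ∧
      (∃ v ∈ C, hammingNorm v = 12) ∧
      {v | v ∈ C ∧ hammingNorm v = 12}.ncard = 966 ∧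
      {v | v ∈ C ∧ hammingNorm v = 14}.ncard = 12376 := by
  refine ⟨genCode matA, sd, min_weight, ?_, (ncard_eq 12).trans counts.1,
    (ncard_eq 14).trans counts.2⟩
  have h : {v | v ∈ genCode matA ∧ hammingNorm v = 12}.ncard ≠ 0 := by
    rw [ncard_eq, counts.1]; norm_num
  obtain ⟨v, hv⟩ := Set.nonempty_of_ncard_ne_zero h
  exact ⟨v, hv.1, hv.2⟩
end
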